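/- arXiv:2311.17579 — 2 statements merged into one kernel-verified Lean document; each statement's English description precedes it below -/
import Mathlib

section
/- Let N ≥ 1, 0 < q < 1 and 0 < γ < min{2, N}. Let u₀ : ℝ^N → ℝ be a non-negative continuous function vanishing at infinity. Then there exists a non-negative function u : ℝ^N × [0,∞) → ℝ such that for every t ≥ 0 the map x ↦ u(x,t) is continuous and vanishes at infinity, the map t ↦ u(·,t) is continuous from [0,∞) into the bounded continuous functions with the sup norm, and for every t ≥ 0 and x ∈ ℝ^N one has u(x,t) = ∫_{ℝ^N} G_t(x−y) u₀(y) dy + ∫₀ᵗ ∫_{ℝ^N} G_{t−σ}(x−y) |y|^{−γ} u(y,σ)^q dy dσ. -/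
open MeasureTheory Filter Real

/-- The heat kernel `G_t(x) = (4πt)^{-N/2} exp(-|x|²/(4t))` on `ℝ^N`. -/
noncomputable def heatKernel (N : ℕ) (t : ℝ) (x : EuclideanSpace ℝ (Fin N)) : ℝ :=
  (4 * π * t) ^ (-(N : ℝ) / 2) * Real.exp (-‖x‖ ^ 2 / (4 * t))

/-!
The Duhamel kernel `G_{t-σ}(x-y) |y|^{-γ}` on `0 < σ < t` has total mass `∫₀ᵗ s^{-γ/2} P(x/√s) ds`,
where `P = G₁ * |·|^{-γ}` is in `C₀` because `γ < N`. As `γ < 2`, this mass is finite, depends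
continuously on `(t, x)`, and vanishes as `x → ∞`, locally uniformly in `t`.

Since `q < 1`, a large enough constant is a supersolution on `[0, T]`, so the least fixed point of
the monotone mild map on `[0, ∞]`-valued functions is bounded on `[0, T]`. By Fatou's lemma Duhamel
integrals are lower semicontinuous; applied to a density `v ≤ A` and to `A - v`, whose Duhamel
integrals sum to a continuous function, this makes the least fixed point continuous.
-/

namespace HeatEquation

open scoped Topology ENNReal ZeroAtInfty

section KernelIntegrals

variable {X R : Type*} [TopologicalSpace X] {x₀ : X}

lemma continuousAt_of_lowerSemicontinuousAt_of_continuousAt_add {f g : X → ℝ≥0∞}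
    (hf : LowerSemicontinuousAt f x₀) (hg : LowerSemicontinuousAt g x₀)
    (hfg : ContinuousAt (fun x => f x + g x) x₀) (hgx₀ : g x₀ ≠ ∞) : ContinuousAt f x₀ := by
  refine continuousAt_iff_lower_upperSemicontinuousAt.2 ⟨hf, fun d hd => ?_⟩
  obtain ⟨m, hm, hmd⟩ := exists_between (ENNReal.add_lt_add_right hgx₀ hd)
  filter_upwards [hfg.eventually (gt_mem_nhds hm), (lowerSemicontinuousAt_const.add hg) m hmd]
    with x hx hx'
  exact lt_of_add_lt_add_right (hx.trans hx')

variable [FirstCountableTopology X] [MeasurableSpace R] {μ : Measure R} {k : X → R → ℝ≥0∞}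

lemma lowerSemicontinuousAt_lintegral_mul_of_measurable (hk : ∀ x, Measurable (k x))
    (hlsc : ∀ r, LowerSemicontinuousAt (fun x => k x r) x₀) {v : R → ℝ≥0∞} (hv : Measurable v) :
    LowerSemicontinuousAt (fun x => ∫⁻ r, k x r * v r ∂μ) x₀ := by
  rw [lowerSemicontinuousAt_iff_le_liminf]
  calc ∫⁻ r, k x₀ r * v r ∂μ
      ≤ ∫⁻ r, liminf (fun x => k x r * v r) (𝓝 x₀) ∂μ := lintegral_mono fun r => by
        calc k x₀ r * v r
            ≤ liminf (fun x => k x r) (𝓝 x₀) * liminf (fun _ => v r) (𝓝 x₀) := by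
              rw [liminf_const]
              gcongr
              exact lowerSemicontinuousAt_iff_le_liminf.1 (hlsc r)
          _ ≤ liminf (fun x => k x r * v r) (𝓝 x₀) := ENNReal.le_liminf_mul
    _ ≤ liminf (fun x => ∫⁻ r, k x r * v r ∂μ) (𝓝 x₀) :=
        lintegral_liminf_le fun x => (hk x).mul hv

lemma lowerSemicontinuousAt_lintegral_mul (hk : ∀ x, Measurable (k x)) (hk₀ : ∀ r, k x₀ r ≠ ∞)
    (hlsc : ∀ r, LowerSemicontinuousAt (fun x => k x r) x₀) (v : R → ℝ≥0∞) :
    LowerSemicontinuousAt (fun x => ∫⁻ r, k x r * v r ∂μ) x₀ := by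
  obtain ⟨g, hg, hgv, hg_eq⟩ := exists_measurable_le_lintegral_eq μ fun r => k x₀ r * v r
  have hle : ∀ r, g r / k x₀ r ≤ v r := fun r => ENNReal.div_le_of_le_mul' (hgv r)
  have hmul : ∀ r, g r = k x₀ r * (g r / k x₀ r) := fun r => by
    by_cases h : k x₀ r = 0
    · simpa [h] using hgv r
    · exact (ENNReal.mul_div_cancel h (hk₀ r)).symm
  intro y hy
  dsimp only at hy
  rw [hg_eq, lintegral_congr hmul] at hy
  filter_upwards [lowerSemicontinuousAt_lintegral_mul_of_measurable hk hlsc (hg.div (hk x₀)) y hy]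
    with x hx
  exact hx.trans_le (lintegral_mono fun r => by gcongr; exact hle r)

-- Both `∫ k v` and `∫ k (A - v)` are lower semicontinuous, and their sum `A ∫ k` is continuous.
lemma continuousAt_lintegral_mul (hk : ∀ x, Measurable (k x))
    (hlsc : ∀ r, LowerSemicontinuousAt (fun x => k x r) x₀)
    (hmass : ContinuousAt (fun x => ∫⁻ r, k x r ∂μ) x₀) (hfin : ∫⁻ r, k x₀ r ∂μ ≠ ∞)
    {v : R → ℝ≥0∞} (hv : Measurable v) {A : ℝ≥0∞} (hA : A ≠ ∞)
    (hvA : ∀ᶠ x in 𝓝 x₀, ∀ r, k x r ≠ 0 → v r ≤ A) :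
    ContinuousAt (fun x => ∫⁻ r, k x r * v r ∂μ) x₀ := by
  have hv' : Measurable fun r => A - v r := measurable_const.sub hv
  have hadd : (fun x => (∫⁻ r, k x r ∂μ) * A)
      =ᶠ[𝓝 x₀] fun x => ∫⁻ r, k x r * v r ∂μ + ∫⁻ r, k x r * (A - v r) ∂μ := by
    filter_upwards [hvA] with x hx
    have hm : Measurable fun r => k x r * v r := (hk x).mul hv
    rw [← lintegral_mul_const _ (hk x), ← lintegral_add_left hm]
    refine lintegral_congr fun r => ?_
    by_cases h : k x r = 0
    · simp [h]
    · rw [← mul_add, add_tsub_cancel_of_le (hx r h)]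
  have hsum_ne_top : ∫⁻ r, k x₀ r * v r ∂μ + ∫⁻ r, k x₀ r * (A - v r) ∂μ ≠ ∞ :=
    hadd.self_of_nhds.symm.trans_ne (ENNReal.mul_ne_top hfin hA)
  have hsum : ContinuousAt (fun x => (∫⁻ r, k x r ∂μ) * A) x₀ :=
    ENNReal.Tendsto.mul_const hmass (Or.inr hA)
  exact continuousAt_of_lowerSemicontinuousAt_of_continuousAt_add
    (lowerSemicontinuousAt_lintegral_mul_of_measurable hk hlsc hv)
    (lowerSemicontinuousAt_lintegral_mul_of_measurable hk hlsc hv')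
    (hsum.congr hadd) (ENNReal.add_ne_top.1 hsum_ne_top).2

end KernelIntegrals

section VanishingAtInfinity

variable {E : Type*} [NormedAddCommGroup E]

instance isCountablyGenerated_cocompact [ProperSpace E] : (cocompact E).IsCountablyGenerated := by
  rw [← Metric.cobounded_eq_cocompact, ← comap_norm_atTop]
  infer_instance

lemma norm_apply_le_norm (g : C₀(E, ℝ)) (x : E) : ‖g x‖ ≤ ‖g‖ :=
  g.toBCF.norm_coe_le_norm x

variable [MeasurableSpace E] [BorelSpace E] {μ : Measure E} {f : E → ℝ}

lemma integrable_mul_comp (hf : Integrable f μ) (g : C₀(E, ℝ)) {φ : E → E} (hφ : Continuous φ) :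
    Integrable (fun z => f z * g (φ z)) μ :=
  hf.mul_bdd (c := ‖g‖) (g.continuous.comp hφ).aestronglyMeasurable
    (Eventually.of_forall fun _ => norm_apply_le_norm g _)

lemma tendsto_integral_mul_comp {ι : Type*} {l : Filter ι} [l.IsCountablyGenerated]
    (hf : Integrable f μ) (g : C₀(E, ℝ)) {φ : ι → E → E} (hφ : ∀ i, Continuous (φ i))
    {G : E → ℝ} (hlim : ∀ z, Tendsto (fun i => g (φ i z)) l (𝓝 (G z))) :
    Tendsto (fun i => ∫ z, f z * g (φ i z) ∂μ) l (𝓝 (∫ z, f z * G z ∂μ)) := by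
  refine tendsto_integral_filter_of_dominated_convergence (fun z => ‖f z‖ * ‖g‖)
    (Eventually.of_forall fun i => (integrable_mul_comp hf g (hφ i)).aestronglyMeasurable)
    (Eventually.of_forall fun i => Eventually.of_forall fun z => ?_)
    (hf.norm.mul_const _) (Eventually.of_forall fun z => (hlim z).const_mul (f z))
  rw [norm_mul]
  gcongr
  exact norm_apply_le_norm g _

/-- The convolution `f * g` of an integrable `f` with `g ∈ C₀`, as an element of `C₀`. Only the
proof of integrability is an explicit argument: it determines `f` and the measure. -/
noncomputable def convolution [ProperSpace E] (hf : Integrable f μ) (g : C₀(E, ℝ)) :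
    C₀(E, ℝ) where
  toFun a := ∫ z, f z * g (a - z) ∂μ
  continuous_toFun := continuous_iff_continuousAt.2 fun a =>
    tendsto_integral_mul_comp hf g (φ := fun a z => a - z) (fun a => by fun_prop) fun z =>
      Continuous.tendsto (by fun_prop) a
  zero_at_infty' := by
    simpa using tendsto_integral_mul_comp (φ := fun a z => a - z) hf g (fun a => by fun_prop)
      fun z => (zero_at_infty g).comp (Homeomorph.subRight z).isClosedEmbedding.tendsto_cocompact

end VanishingAtInfinity

section SpatialInfinity

variable {X : Type*} [TopologicalSpace X] {f : ℝ × X → ℝ}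

/-- Convergence to `0` at spatial infinity, locally uniformly in time: as `x → ∞`, `f (t, x) → 0`
uniformly over `t ≤ T`, for every `T`. -/
def VanishesAtSpatialInfinity (f : ℝ × X → ℝ) : Prop :=
  ∀ T, Tendsto f (𝓟 (Set.Iic T) ×ˢ cocompact X) (𝓝 0)

lemma eventually_fst_le (T : ℝ) : ∀ᶠ p : ℝ × X in 𝓟 (Set.Iic T) ×ˢ cocompact X, p.1 ≤ T :=
  tendsto_fst.eventually (mem_principal_self _)

lemma VanishesAtSpatialInfinity.tendsto (hf : VanishesAtSpatialInfinity f) (t : ℝ) :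
    Tendsto (fun x => f (t, x)) (cocompact X) (𝓝 0) :=
  (hf t).comp <| (tendsto_principal.2 <| Eventually.of_forall fun _ => Set.self_mem_Iic).prodMk
    tendsto_id

lemma VanishesAtSpatialInfinity.tendstoUniformly (hf : VanishesAtSpatialInfinity f)
    (hfc : Continuous f) (t₀ : ℝ) :
    TendstoUniformly (fun t x => f (t, x)) (fun x => f (t₀, x)) (𝓝 t₀) := by
  rw [Metric.tendstoUniformly_iff]
  intro ε hε
  obtain ⟨P, hP, Q, hQ, hPQ⟩ := eventually_prod_iff.1
    ((hf (t₀ + 1)).eventually (Metric.ball_mem_nhds 0 (half_pos hε)))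
  obtain ⟨K, hK, hKQ⟩ := mem_cocompact.1 hQ
  have near : ∀ᶠ t in 𝓝 t₀, ∀ x ∈ K, dist (f (t₀, x)) (f (t, x)) < ε := by
    refine hK.eventually_forall_of_forall_eventually fun x _ => ?_
    have hc : Continuous fun z : ℝ × X => dist (f (t₀, z.2)) (f (z.1, z.2)) := by fun_prop
    exact hc.continuousAt.eventually (gt_mem_nhds (by simpa using hε))
  filter_upwards [near, Iic_mem_nhds (lt_add_one t₀)] with t ht ht_le x
  by_cases hx : x ∈ K
  · exact ht x hx
  · have h₀ := hPQ (eventually_principal.1 hP t₀ (lt_add_one t₀).le) (hKQ hx)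
    have h := hPQ (eventually_principal.1 hP t ht_le) (hKQ hx)
    linarith [dist_triangle_right (f (t₀, x)) (f (t, x)) 0, Metric.mem_ball.1 h₀,
      Metric.mem_ball.1 h]

end SpatialInfinity

section HeatKernel

variable {N : ℕ}

lemma heatKernel_nonneg {t : ℝ} (ht : 0 ≤ t) (x : EuclideanSpace ℝ (Fin N)) :
    0 ≤ heatKernel N t x := by
  unfold heatKernel
  positivity

lemma measurable_heatKernel :
    Measurable fun p : ℝ × EuclideanSpace ℝ (Fin N) => heatKernel N p.1 p.2 := by
  unfold heatKernel
  fun_prop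

lemma continuousAt_heatKernel {p : ℝ × EuclideanSpace ℝ (Fin N)} (hp : 0 < p.1) :
    ContinuousAt (fun p : ℝ × EuclideanSpace ℝ (Fin N) => heatKernel N p.1 p.2) p := by
  unfold heatKernel
  refine ContinuousAt.mul (ContinuousAt.rpow_const (by fun_prop) (Or.inl ?_)) ?_
  · positivity
  · refine ContinuousAt.rexp (ContinuousAt.div (by fun_prop) (by fun_prop) ?_)
    positivity

lemma tendsto_heatKernel_one_cocompact :
    Tendsto (heatKernel N 1) (cocompact (EuclideanSpace ℝ (Fin N))) (𝓝 0) := by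
  have hsq : Tendsto (fun x : EuclideanSpace ℝ (Fin N) => ‖x‖ ^ 2 / (4 * 1)) (cocompact _) atTop :=
    ((tendsto_pow_atTop two_ne_zero).comp tendsto_norm_cocompact_atTop).atTop_div_const
      (by norm_num)
  unfold heatKernel
  simpa [Function.comp_def, neg_div] using
    (tendsto_exp_neg_atTop_nhds_zero.comp hsq).const_mul ((4 * π * 1) ^ (-(N : ℝ) / 2))

/-- The time-one heat kernel `G₁`, as an element of `C₀`. -/
noncomputable def unitHeatKernel (N : ℕ) : C₀(EuclideanSpace ℝ (Fin N), ℝ) where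
  toFun := heatKernel N 1
  continuous_toFun := by
    unfold heatKernel
    fun_prop
  zero_at_infty' := tendsto_heatKernel_one_cocompact

lemma integral_heatKernel_one : ∫ x, heatKernel N 1 x = 1 := by
  have hgauss : ∀ x : EuclideanSpace ℝ (Fin N),
      heatKernel N 1 x = (4 * π) ^ (-(N : ℝ) / 2) * rexp (-(1 / 4) * ‖x‖ ^ 2) := fun x => by
    simp only [heatKernel]
    ring_nf
  simp_rw [hgauss]
  rw [integral_const_mul, GaussianFourier.integral_rexp_neg_mul_sq_norm (by norm_num),
    finrank_euclideanSpace_fin, show π / (1 / 4) = 4 * π by ring, ← Real.rpow_add (by positivity),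
    neg_div, neg_add_cancel, Real.rpow_zero]

lemma integrable_heatKernel_one : Integrable (heatKernel N 1) :=
  .of_integral_ne_zero (by simp [integral_heatKernel_one])

lemma heatKernel_sqrt_smul {s : ℝ} (hs : 0 < s) (z : EuclideanSpace ℝ (Fin N)) :
    heatKernel N s (√s • z) = (√s ^ N)⁻¹ * heatKernel N 1 z := by
  have hpow : (√s ^ N)⁻¹ = s ^ (-(N : ℝ) / 2) := by
    rw [neg_div, Real.rpow_neg hs.le, Real.sqrt_eq_rpow, ← Real.rpow_natCast, ← Real.rpow_mul hs.le]
    ring_nf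
  have hexp : -(s * ‖z‖ ^ 2) / (4 * s) = -‖z‖ ^ 2 / (4 * 1) := by
    field_simp
  unfold heatKernel
  rw [hpow, Real.mul_rpow (by positivity) hs.le, norm_smul, mul_one, mul_pow, Real.norm_eq_abs,
    sq_abs, Real.sq_sqrt hs.le, hexp]
  ring

lemma integral_heatKernel_mul {s : ℝ} (hs : 0 < s) (g : EuclideanSpace ℝ (Fin N) → ℝ)
    (x : EuclideanSpace ℝ (Fin N)) :
    ∫ y, heatKernel N s (x - y) * g y = ∫ z, heatKernel N 1 z * g (x - √s • z) := by
  have hscale := Measure.integral_comp_smul volume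
    (fun w : EuclideanSpace ℝ (Fin N) => heatKernel N s w * g (x - w)) (√s)
  rw [finrank_euclideanSpace_fin, abs_of_pos (by positivity), smul_eq_mul] at hscale
  simp_rw [heatKernel_sqrt_smul hs, mul_assoc] at hscale
  rw [integral_const_mul] at hscale
  rw [← integral_sub_left_eq_self _ volume x]
  simp only [sub_sub_cancel]
  exact (mul_left_cancel₀ (by positivity) hscale).symm

lemma integrable_heatKernel_mul {s : ℝ} (hs : 0 < s) {g : EuclideanSpace ℝ (Fin N) → ℝ}
    {x : EuclideanSpace ℝ (Fin N)}
    (h : Integrable fun z => heatKernel N 1 z * g (x - √s • z)) :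
    Integrable fun y => heatKernel N s (x - y) * g y := by
  rw [← integrable_comp_sub_left _ x]
  simp only [sub_sub_cancel]
  rw [← integrable_comp_smul_iff volume _ (Real.sqrt_pos.2 hs).ne']
  simp_rw [heatKernel_sqrt_smul hs, mul_assoc]
  exact h.const_mul _

end HeatKernel

section HeatSemigroup

variable {N : ℕ} {g : C₀(EuclideanSpace ℝ (Fin N), ℝ)}

/-- Points `(t, x)` of space-time, with the time coordinate first. -/
abbrev SpaceTime (N : ℕ) : Type := ℝ × EuclideanSpace ℝ (Fin N)

/-- The solution `(t, x) ↦ (G_t * g)(x)` of the heat equation with initial datum `g`, rescaled to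
`∫ G₁(z) g(x - √t z) dz` so that it is `g` itself for `t ≤ 0`. -/
noncomputable def heatFlow (g : C₀(EuclideanSpace ℝ (Fin N), ℝ)) (p : SpaceTime N) : ℝ :=
  ∫ z, heatKernel N 1 z * g (p.2 - √p.1 • z)

lemma heatFlow_zero (x : EuclideanSpace ℝ (Fin N)) : heatFlow g (0, x) = g x := by
  simp [heatFlow, integral_mul_const, integral_heatKernel_one]

lemma heatFlow_eq_integral {t : ℝ} (ht : 0 < t) (x : EuclideanSpace ℝ (Fin N)) :
    heatFlow g (t, x) = ∫ y, heatKernel N t (x - y) * g y :=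
  (integral_heatKernel_mul ht g x).symm

lemma heatFlow_nonneg (hg : ∀ x, 0 ≤ g x) (p : SpaceTime N) : 0 ≤ heatFlow g p :=
  integral_nonneg fun _ => mul_nonneg (heatKernel_nonneg zero_le_one _) (hg _)

lemma heatFlow_le_norm (p : SpaceTime N) : heatFlow g p ≤ ‖g‖ :=
  calc heatFlow g p ≤ ∫ z, heatKernel N 1 z * ‖g‖ :=
        integral_mono (integrable_mul_comp integrable_heatKernel_one g (by fun_prop))
          (integrable_heatKernel_one.mul_const _) fun z =>
            mul_le_mul_of_nonneg_left ((le_norm_self _).trans (norm_apply_le_norm g _))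
              (heatKernel_nonneg zero_le_one _)
    _ = ‖g‖ := by rw [integral_mul_const, integral_heatKernel_one, one_mul]

lemma continuous_heatFlow : Continuous (heatFlow g) :=
  continuous_iff_continuousAt.2 fun p =>
    tendsto_integral_mul_comp (φ := fun (p : SpaceTime N) z => p.2 - √p.1 • z)
      integrable_heatKernel_one g (fun p => by fun_prop) fun z =>
        Continuous.tendsto (by fun_prop) p

lemma vanishesAtSpatialInfinity_heatFlow : VanishesAtSpatialInfinity (heatFlow g) := by
  intro T
  have hshift : ∀ z, Tendsto (fun p : SpaceTime N => p.2 - √p.1 • z)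
      (𝓟 (Set.Iic T) ×ˢ cocompact _) (cocompact _) := fun z => by
    rw [← Metric.cobounded_eq_cocompact, ← tendsto_norm_atTop_iff_cobounded,
      Metric.cobounded_eq_cocompact]
    refine tendsto_atTop_mono' _ ?_ (tendsto_atTop_add_const_right _ (-(√T * ‖z‖))
      (tendsto_norm_cocompact_atTop.comp tendsto_snd))
    filter_upwards [eventually_fst_le T] with p hp
    have hsmul : ‖√p.1 • z‖ ≤ √T * ‖z‖ := by
      rw [norm_smul, Real.norm_of_nonneg (Real.sqrt_nonneg _)]
      gcongr
    dsimp only [Function.comp_apply]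
    linarith [norm_sub_norm_le p.2 (√p.1 • z)]
  unfold heatFlow
  simpa using tendsto_integral_mul_comp (φ := fun (p : SpaceTime N) z => p.2 - √p.1 • z)
    integrable_heatKernel_one g (fun p => by fun_prop) fun z =>
      (zero_at_infty g).comp (hshift z)

end HeatSemigroup

section TruncatedPower

variable {E : Type*} [NormedAddCommGroup E] [ProperSpace E] {α : ℝ}

variable (E) in
/-- The power `‖y‖^{-α}` made constant on the unit ball, as an element of `C₀`. -/
noncomputable def truncatedPower (hα : 0 < α) : C₀(E, ℝ) where
  toFun y := max ‖y‖ 1 ^ (-α)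
  continuous_toFun := Continuous.rpow_const (by fun_prop) fun y => Or.inl (by positivity)
  zero_at_infty' := (tendsto_rpow_neg_atTop hα).comp <|
    tendsto_atTop_mono (fun _ => le_max_left _ _) tendsto_norm_cocompact_atTop

lemma truncatedPower_of_one_le (hα : 0 < α) {y : E} (hy : 1 ≤ ‖y‖) :
    truncatedPower E hα y = ‖y‖ ^ (-α) :=
  congrArg (· ^ (-α)) (max_eq_left hy)

lemma integrable_norm_rpow_sub_truncatedPower [NormedSpace ℝ E] [MeasurableSpace E]
    [BorelSpace E] {μ : Measure E} [μ.IsAddHaarMeasure] (hα : 0 < α)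
    (hαE : α < Module.finrank ℝ E) :
    Integrable (fun y : E => ‖y‖ ^ (-α) - truncatedPower E hα y) μ := by
  have : FiniteDimensional ℝ E := .of_finrank_pos (by exact_mod_cast hα.trans hαE)
  have hsupp : Function.support (fun y : E => ‖y‖ ^ (-α) - truncatedPower E hα y)
      ⊆ Metric.ball 0 1 := fun y hy => by
    rw [mem_ball_zero_iff]
    by_contra! h
    exact hy (sub_eq_zero.2 (truncatedPower_of_one_le hα h).symm)
  rw [← integrableOn_iff_integrable_of_support_subset hsupp]
  refine Integrable.sub ?_ ?_
  · exact integrableOn_ball_of_norm_le_rpow (C := 1) (by exact_mod_cast hα.trans hαE) hαE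
      (ae_of_all _ fun y => by simp [Real.abs_rpow_of_nonneg])
      (by fun_prop : Measurable fun y : E => ‖y‖ ^ (-α)).aestronglyMeasurable
  · exact ((truncatedPower E hα).continuous.locallyIntegrable.integrableOn_isCompact
      (isCompact_closedBall 0 1)).mono_set Metric.ball_subset_closedBall

end TruncatedPower

section GaussPotential

variable {N : ℕ} {γ : ℝ}

lemma integrable_euclidean_norm_rpow_sub_truncatedPower (hγ : 0 < γ) (hγN : γ < N) :
    Integrable fun y : EuclideanSpace ℝ (Fin N) => ‖y‖ ^ (-γ) - truncatedPower _ hγ y :=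
  integrable_norm_rpow_sub_truncatedPower hγ (by simpa using hγN)

/-- The potential `G₁ * |·|^{-γ}`. The weight is split into a part in `C₀` and an integrable
singular part, so that both convolutions are in `C₀`. -/
noncomputable def gaussPotential (hγ : 0 < γ) (hγN : γ < N) : C₀(EuclideanSpace ℝ (Fin N), ℝ) :=
  convolution integrable_heatKernel_one (truncatedPower _ hγ) +
    convolution (integrable_euclidean_norm_rpow_sub_truncatedPower hγ hγN) (unitHeatKernel N)

lemma integrable_heatKernel_one_mul_singularPart (hγ : 0 < γ) (hγN : γ < N)
    (a : EuclideanSpace ℝ (Fin N)) : Integrable fun z =>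
      heatKernel N 1 z * (‖a - z‖ ^ (-γ) - truncatedPower _ hγ (a - z)) := by
  have h := integrable_mul_comp (integrable_euclidean_norm_rpow_sub_truncatedPower hγ hγN)
    (unitHeatKernel N) (φ := fun z => a - z) (by fun_prop)
  rw [← integrable_comp_sub_left _ a] at h
  simpa [unitHeatKernel, mul_comm] using h

lemma integrable_heatKernel_one_mul_norm_rpow (hγ : 0 < γ) (hγN : γ < N)
    (a : EuclideanSpace ℝ (Fin N)) :
    Integrable fun z => heatKernel N 1 z * ‖a - z‖ ^ (-γ) := by
  have h := (integrable_mul_comp integrable_heatKernel_one (truncatedPower _ hγ)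
    (φ := fun z => a - z) (by fun_prop)).add (integrable_heatKernel_one_mul_singularPart hγ hγN a)
  refine h.congr (ae_of_all _ fun z => ?_)
  simp only [Pi.add_apply]
  ring

lemma gaussPotential_apply (hγ : 0 < γ) (hγN : γ < N) (a : EuclideanSpace ℝ (Fin N)) :
    gaussPotential hγ hγN a = ∫ z, heatKernel N 1 z * ‖a - z‖ ^ (-γ) := by
  have hsingular : ∫ z, (‖z‖ ^ (-γ) - truncatedPower _ hγ z) * heatKernel N 1 (a - z)
      = ∫ z, heatKernel N 1 z * (‖a - z‖ ^ (-γ) - truncatedPower _ hγ (a - z)) := by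
    rw [← integral_sub_left_eq_self _ volume a]
    simp only [sub_sub_cancel, mul_comm]
  calc gaussPotential hγ hγN a
      = (∫ z, heatKernel N 1 z * truncatedPower _ hγ (a - z)) +
          ∫ z, (‖z‖ ^ (-γ) - truncatedPower _ hγ z) * heatKernel N 1 (a - z) := rfl
    _ = ∫ z, heatKernel N 1 z * ‖a - z‖ ^ (-γ) := by
      rw [hsingular, ← integral_add
        (integrable_mul_comp integrable_heatKernel_one _ (by fun_prop))
        (integrable_heatKernel_one_mul_singularPart hγ hγN a)]
      exact integral_congr_ae (ae_of_all _ fun z => by ring)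

lemma gaussPotential_nonneg (hγ : 0 < γ) (hγN : γ < N) (a : EuclideanSpace ℝ (Fin N)) :
    0 ≤ gaussPotential hγ hγN a := by
  rw [gaussPotential_apply]
  exact integral_nonneg fun _ => mul_nonneg (heatKernel_nonneg zero_le_one _) (by positivity)

lemma norm_sub_sqrt_smul_rpow {s : ℝ} (hs : 0 < s) (x z : EuclideanSpace ℝ (Fin N)) :
    ‖x - √s • z‖ ^ (-γ) = s ^ (-(γ / 2)) * ‖(√s)⁻¹ • x - z‖ ^ (-γ) := by
  have hfactor : x - √s • z = √s • ((√s)⁻¹ • x - z) := by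
    rw [smul_sub, smul_inv_smul₀ (Real.sqrt_pos.2 hs).ne']
  rw [hfactor, norm_smul, Real.norm_of_nonneg (Real.sqrt_nonneg _),
    Real.mul_rpow (Real.sqrt_nonneg _) (norm_nonneg _), Real.sqrt_eq_rpow, ← Real.rpow_mul hs.le]
  ring_nf

lemma integral_heatKernel_mul_norm_rpow (hγ : 0 < γ) (hγN : γ < N) {s : ℝ} (hs : 0 < s)
    (x : EuclideanSpace ℝ (Fin N)) :
    ∫ y, heatKernel N s (x - y) * ‖y‖ ^ (-γ)
      = s ^ (-(γ / 2)) * gaussPotential hγ hγN ((√s)⁻¹ • x) := by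
  rw [integral_heatKernel_mul hs (fun y => ‖y‖ ^ (-γ)), gaussPotential_apply,
    ← integral_const_mul]
  simp_rw [norm_sub_sqrt_smul_rpow hs, mul_left_comm _ (s ^ (-(γ / 2)))]

lemma integrable_heatKernel_mul_norm_rpow (hγ : 0 < γ) (hγN : γ < N) {s : ℝ} (hs : 0 < s)
    (x : EuclideanSpace ℝ (Fin N)) :
    Integrable fun y => heatKernel N s (x - y) * ‖y‖ ^ (-γ) := by
  refine integrable_heatKernel_mul hs (g := fun y => ‖y‖ ^ (-γ)) ?_
  simp_rw [norm_sub_sqrt_smul_rpow hs, mul_left_comm _ (s ^ (-(γ / 2)))]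
  exact (integrable_heatKernel_one_mul_norm_rpow hγ hγN _).const_mul _

end GaussPotential

section ScaledTimeIntegral

variable {E : Type*} [NormedAddCommGroup E] [NormedSpace ℝ E] {β T : ℝ} {P : C₀(E, ℝ)}

/-- The self-similar time integral `∫₀ᵗ s^{-β} P(x / √s) ds`, as a function of `(t, x)`. -/
noncomputable def scaledTimeIntegral (β : ℝ) (P : C₀(E, ℝ)) (p : ℝ × E) : ℝ :=
  ∫ s, (Set.Ioo 0 p.1).indicator (fun s => s ^ (-β) * P ((√s)⁻¹ • p.2)) s

lemma integrable_indicator_rpow_mul (hβ : β < 1) (C T : ℝ) :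
    Integrable ((Set.Ioo 0 T).indicator fun s : ℝ => s ^ (-β) * C) := by
  rw [integrable_indicator_iff measurableSet_Ioo]
  refine Integrable.mul_const ?_ C
  rcases le_or_gt T 0 with hT | hT
  · simp [Set.Ioo_eq_empty_of_le hT]
  · exact (intervalIntegral.integrableOn_Ioo_rpow_iff hT).2 (by linarith)

lemma norm_indicator_rpow_mul_comp_le {p : ℝ × E} (hp : p.1 ≤ T) (s : ℝ) :
    ‖(Set.Ioo 0 p.1).indicator (fun s => s ^ (-β) * P ((√s)⁻¹ • p.2)) s‖
      ≤ (Set.Ioo 0 T).indicator (fun s : ℝ => s ^ (-β) * ‖P‖) s := by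
  rw [norm_indicator_eq_indicator_norm]
  refine (Set.indicator_le_indicator_of_subset (Set.Ioo_subset_Ioo_right hp)
    (fun s => norm_nonneg _) s).trans (Set.indicator_le_indicator' fun hs => ?_)
  rw [norm_mul, Real.norm_of_nonneg (Real.rpow_nonneg hs.1.le _)]
  gcongr
  · exact Real.rpow_nonneg hs.1.le _
  · exact norm_apply_le_norm P _

lemma measurable_indicator_rpow_mul_comp (p : ℝ × E) :
    Measurable ((Set.Ioo 0 p.1).indicator fun s => s ^ (-β) * P ((√s)⁻¹ • p.2)) := by
  borelize E
  have hscale : Measurable fun s : ℝ => (√s)⁻¹ • p.2 :=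
    (continuous_id.smul continuous_const).measurable.comp (by fun_prop : Measurable fun s => (√s)⁻¹)
  exact ((by fun_prop : Measurable fun s : ℝ => s ^ (-β)).mul
    (P.continuous.measurable.comp hscale)).indicator measurableSet_Ioo

lemma integrable_indicator_rpow_mul_comp (hβ : β < 1) (p : ℝ × E) :
    Integrable ((Set.Ioo 0 p.1).indicator fun s => s ^ (-β) * P ((√s)⁻¹ • p.2)) :=
  (integrable_indicator_rpow_mul hβ ‖P‖ p.1).mono'
    (measurable_indicator_rpow_mul_comp p).aestronglyMeasurable
    (ae_of_all _ (norm_indicator_rpow_mul_comp_le le_rfl))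

lemma scaledTimeIntegral_le (hβ : β < 1) {p : ℝ × E} (hp : p.1 ≤ T) :
    scaledTimeIntegral β P p ≤ ∫ s, (Set.Ioo 0 T).indicator (fun s : ℝ => s ^ (-β) * ‖P‖) s :=
  (le_norm_self _).trans <| norm_integral_le_of_norm_le (integrable_indicator_rpow_mul hβ ‖P‖ T)
    (ae_of_all _ (norm_indicator_rpow_mul_comp_le hp))

lemma tendsto_scaledTimeIntegral {l : Filter (ℝ × E)} [l.IsCountablyGenerated] (hβ : β < 1)
    (hT : ∀ᶠ p in l, p.1 ≤ T) {F : ℝ → ℝ}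
    (hF : ∀ᵐ s, Tendsto (fun p : ℝ × E =>
      (Set.Ioo 0 p.1).indicator (fun s => s ^ (-β) * P ((√s)⁻¹ • p.2)) s) l (𝓝 (F s))) :
    Tendsto (scaledTimeIntegral β P) l (𝓝 (∫ s, F s)) :=
  tendsto_integral_filter_of_dominated_convergence _
    (Eventually.of_forall fun p => (measurable_indicator_rpow_mul_comp p).aestronglyMeasurable)
    (hT.mono fun _ hp => ae_of_all _ (norm_indicator_rpow_mul_comp_le hp))
    (integrable_indicator_rpow_mul hβ ‖P‖ T) hF

lemma continuous_scaledTimeIntegral (hβ : β < 1) : Continuous (scaledTimeIntegral β P) := by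
  refine continuous_iff_continuousAt.2 fun p₀ => ?_
  have hT : ∀ᶠ p in 𝓝 p₀, p.1 ≤ p₀.1 + 1 :=
    continuousAt_fst.eventually (Iic_mem_nhds (lt_add_one p₀.1))
  refine tendsto_scaledTimeIntegral hβ hT ?_
  filter_upwards [Measure.ae_ne volume p₀.1] with s hs
  have hcont : Continuous fun p : ℝ × E => s ^ (-β) * P ((√s)⁻¹ • p.2) := by fun_prop
  have hmem : ∀ᶠ p in 𝓝 p₀, (s ∈ Set.Ioo 0 p.1 ↔ s ∈ Set.Ioo 0 p₀.1) := by
    rcases hs.lt_or_gt with h | h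
    · filter_upwards [continuousAt_fst.eventually (lt_mem_nhds h)] with p hp using by simp [h, hp]
    · filter_upwards [continuousAt_fst.eventually (gt_mem_nhds h)] with p hp
        using by simp [h.not_gt, hp.not_gt]
  by_cases h : s ∈ Set.Ioo 0 p₀.1
  · rw [Set.indicator_of_mem h]
    refine (hcont.tendsto p₀).congr' (hmem.mono fun p hp => ?_)
    simp only [Set.indicator_of_mem (hp.2 h)]
  · rw [Set.indicator_of_notMem h]
    refine tendsto_const_nhds.congr' (hmem.mono fun p hp => ?_)
    simp only [Set.indicator_of_notMem (mt hp.1 h)]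

lemma vanishesAtSpatialInfinity_scaledTimeIntegral [ProperSpace E] (hβ : β < 1) :
    VanishesAtSpatialInfinity (scaledTimeIntegral β P) := by
  intro T
  have hpointwise : ∀ s, Tendsto (fun p : ℝ × E =>
      (Set.Ioo 0 p.1).indicator (fun s => s ^ (-β) * P ((√s)⁻¹ • p.2)) s)
      (𝓟 (Set.Iic T) ×ˢ cocompact E) (𝓝 0) := fun s => by
    rcases le_or_gt s 0 with hs | hs
    · simpa [Set.indicator, hs.not_gt] using tendsto_const_nhds
    have hscale : Tendsto (fun p : ℝ × E => (√s)⁻¹ • p.2)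
        (𝓟 (Set.Iic T) ×ˢ cocompact E) (cocompact E) :=
      (Homeomorph.smulOfNeZero _ (inv_ne_zero (Real.sqrt_pos.2 hs).ne')).isClosedEmbedding
        |>.tendsto_cocompact.comp tendsto_snd
    have hlim := ((zero_at_infty P).comp hscale).const_mul (s ^ (-β))
    rw [mul_zero] at hlim
    exact squeeze_zero_norm (fun p => norm_indicator_le_norm_self _ _)
      (tendsto_zero_iff_norm_tendsto_zero.1 hlim)
  simpa using tendsto_scaledTimeIntegral hβ (eventually_fst_le T) (ae_of_all _ hpointwise)

end ScaledTimeIntegral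

section DuhamelKernel

variable {N : ℕ} {γ : ℝ} {p r : SpaceTime N}

/-- The space-time kernel `G_{t-σ}(x-y) |y|^{-γ}`, cut off to `0 < σ < t`. -/
noncomputable def duhamelKernel (γ : ℝ) (p r : SpaceTime N) : ℝ≥0∞ :=
  {r : SpaceTime N | r.1 ∈ Set.Ioo 0 p.1}.indicator
    (fun r => ENNReal.ofReal (heatKernel N (p.1 - r.1) (p.2 - r.2) * ‖r.2‖ ^ (-γ))) r

lemma duhamelKernel_of_mem (h : r.1 ∈ Set.Ioo 0 p.1) :
    duhamelKernel γ p r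
      = ENNReal.ofReal (heatKernel N (p.1 - r.1) (p.2 - r.2) * ‖r.2‖ ^ (-γ)) :=
  Set.indicator_of_mem (s := {r : SpaceTime N | r.1 ∈ Set.Ioo 0 p.1}) h _

lemma duhamelKernel_of_notMem (h : r.1 ∉ Set.Ioo 0 p.1) : duhamelKernel γ p r = 0 :=
  Set.indicator_of_notMem (s := {r : SpaceTime N | r.1 ∈ Set.Ioo 0 p.1}) h _

lemma lt_of_duhamelKernel_ne_zero (h : duhamelKernel γ p r ≠ 0) : r.1 < p.1 :=
  (not_imp_comm.1 duhamelKernel_of_notMem h).2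

lemma duhamelKernel_ne_top : duhamelKernel γ p r ≠ ∞ := by
  by_cases h : r.1 ∈ Set.Ioo 0 p.1
  · simp [duhamelKernel_of_mem h]
  · simp [duhamelKernel_of_notMem h]

lemma measurable_duhamelKernel (p : SpaceTime N) : Measurable (duhamelKernel γ p) := by
  have hshift : Measurable fun r : SpaceTime N => (p.1 - r.1, p.2 - r.2) := by fun_prop
  exact ((measurable_heatKernel.comp hshift).mul (by fun_prop)).ennreal_ofReal.indicator
    (measurable_fst measurableSet_Ioo)

lemma lowerSemicontinuous_duhamelKernel (r : SpaceTime N) :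
    LowerSemicontinuous fun p => duhamelKernel γ p r := by
  intro p₀
  by_cases h : r.1 ∈ Set.Ioo 0 p₀.1
  · have hK : ContinuousAt (fun p : SpaceTime N => heatKernel N (p.1 - r.1) (p.2 - r.2)) p₀ :=
      ContinuousAt.comp (f := fun p : SpaceTime N => (p.1 - r.1, p.2 - r.2))
        (continuousAt_heatKernel (sub_pos.2 h.2)) (by fun_prop)
    refine ContinuousAt.lowerSemicontinuousAt (ContinuousAt.congr
      (ENNReal.continuous_ofReal.continuousAt.comp (hK.mul_const (‖r.2‖ ^ (-γ)))) ?_)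
    filter_upwards [continuousAt_fst.eventually (lt_mem_nhds h.2)] with p hp
    exact (duhamelKernel_of_mem ⟨h.1, hp⟩).symm
  · intro y hy
    simp [duhamelKernel_of_notMem h] at hy

lemma lintegral_duhamelKernel_slice (hγ : 0 < γ) (hγN : γ < N) (p : SpaceTime N) (σ : ℝ) :
    ∫⁻ y, duhamelKernel γ p (σ, y) = ENNReal.ofReal ((Set.Ioo 0 p.1).indicator
      (fun s => s ^ (-(γ / 2)) * gaussPotential hγ hγN ((√s)⁻¹ • p.2)) (p.1 - σ)) := by
  by_cases h : σ ∈ Set.Ioo 0 p.1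
  · have hs : 0 < p.1 - σ := sub_pos.2 h.2
    have hmem : p.1 - σ ∈ Set.Ioo 0 p.1 := ⟨hs, sub_lt_self _ h.1⟩
    simp_rw [duhamelKernel_of_mem (r := (σ, _)) h]
    rw [Set.indicator_of_mem hmem, ← integral_heatKernel_mul_norm_rpow _ _ hs,
      ofReal_integral_eq_lintegral_ofReal (integrable_heatKernel_mul_norm_rpow hγ hγN hs p.2)]
    exact ae_of_all _ fun y => mul_nonneg (heatKernel_nonneg hs.le _) (by positivity)
  · simp_rw [duhamelKernel_of_notMem (r := (σ, _)) h]
    rw [Set.indicator_of_notMem fun hm => h ⟨by linarith [hm.2], by linarith [hm.1]⟩]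
    simp

lemma lintegral_duhamelKernel (hγ : 0 < γ) (hγN : γ < N) (hγ2 : γ < 2) (p : SpaceTime N) :
    ∫⁻ r, duhamelKernel γ p r
      = ENNReal.ofReal (scaledTimeIntegral (γ / 2) (gaussPotential hγ hγN) p) := by
  rw [Measure.volume_eq_prod, lintegral_prod _ (measurable_duhamelKernel p).aemeasurable]
  simp_rw [lintegral_duhamelKernel_slice hγ hγN p]
  rw [lintegral_sub_left_eq_self (fun s => ENNReal.ofReal ((Set.Ioo 0 p.1).indicator
    (fun s => s ^ (-(γ / 2)) * gaussPotential hγ hγN ((√s)⁻¹ • p.2)) s)) p.1, scaledTimeIntegral,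
    ofReal_integral_eq_lintegral_ofReal (integrable_indicator_rpow_mul_comp (by linarith) p)]
  exact ae_of_all _ <| Set.indicator_nonneg fun s hs =>
    mul_nonneg (Real.rpow_nonneg hs.1.le _) (gaussPotential_nonneg hγ hγN _)

end DuhamelKernel

section Duhamel

variable {N : ℕ} {γ : ℝ} {v w : SpaceTime N → ℝ≥0∞} {p : SpaceTime N} {A : ℝ≥0∞}

/-- The Duhamel integral `∫₀ᵗ ∫ G_{t-σ}(x-y) |y|^{-γ} v(σ, y) dy dσ` at `(t, x)`. -/
noncomputable def duhamel (γ : ℝ) (v : SpaceTime N → ℝ≥0∞) (p : SpaceTime N) : ℝ≥0∞ :=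
  ∫⁻ r, duhamelKernel γ p r * v r

lemma duhamel_zero (x : EuclideanSpace ℝ (Fin N)) : duhamel γ v (0, x) = 0 := by
  simp [duhamel, duhamelKernel_of_notMem]

lemma duhamel_mono (h : ∀ r, r.1 < p.1 → v r ≤ w r) : duhamel γ v p ≤ duhamel γ w p := by
  refine lintegral_mono fun r => ?_
  by_cases hr : duhamelKernel γ p r = 0
  · simp [hr]
  · exact mul_le_mul_right (h r (lt_of_duhamelKernel_ne_zero hr)) _

lemma duhamel_le (hγ : 0 < γ) (hγN : γ < N) (hγ2 : γ < 2) (h : ∀ r, r.1 < p.1 → v r ≤ A) :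
    duhamel γ v p
      ≤ ENNReal.ofReal (scaledTimeIntegral (γ / 2) (gaussPotential hγ hγN) p) * A :=
  calc duhamel γ v p ≤ duhamel γ (fun _ => A) p := duhamel_mono h
    _ = _ := by
      rw [duhamel, lintegral_mul_const _ (measurable_duhamelKernel p),
        lintegral_duhamelKernel hγ hγN hγ2]

lemma lowerSemicontinuous_duhamel (v : SpaceTime N → ℝ≥0∞) :
    LowerSemicontinuous (duhamel γ v) := fun p =>
  lowerSemicontinuousAt_lintegral_mul measurable_duhamelKernel (fun _ => duhamelKernel_ne_top)
    (fun r => lowerSemicontinuous_duhamelKernel r p) v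

lemma continuous_duhamel (hγ : 0 < γ) (hγN : γ < N) (hγ2 : γ < 2) (hv : Measurable v)
    (hvA : ∀ T, ∃ A ≠ ∞, ∀ r, r.1 ≤ T → v r ≤ A) : Continuous (duhamel γ v) := by
  refine continuous_iff_continuousAt.2 fun p₀ => ?_
  obtain ⟨A, hA, hvA⟩ := hvA (p₀.1 + 1)
  refine continuousAt_lintegral_mul measurable_duhamelKernel
    (fun r => lowerSemicontinuous_duhamelKernel r p₀) ?_ ?_ hv hA ?_
  · simp_rw [lintegral_duhamelKernel hγ hγN hγ2]
    exact (ENNReal.continuous_ofReal.comp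
      (continuous_scaledTimeIntegral (by linarith))).continuousAt
  · simp [lintegral_duhamelKernel hγ hγN hγ2]
  · filter_upwards [continuousAt_fst.eventually (Iic_mem_nhds (lt_add_one p₀.1))] with p hp r hr
    exact hvA r ((lt_of_duhamelKernel_ne_zero hr).le.trans hp)

lemma vanishesAtSpatialInfinity_toReal_duhamel (hγ : 0 < γ) (hγN : γ < N) (hγ2 : γ < 2)
    (hvA : ∀ T, ∃ A ≠ ∞, ∀ r, r.1 ≤ T → v r ≤ A) :
    VanishesAtSpatialInfinity fun p => (duhamel γ v p).toReal := by
  intro T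
  obtain ⟨A, hA, hvA⟩ := hvA T
  have hbound : Tendsto (fun p => ENNReal.ofReal
      (scaledTimeIntegral (γ / 2) (gaussPotential hγ hγN) p) * A)
      (𝓟 (Set.Iic T) ×ˢ cocompact _) (𝓝 0) := by
    simpa using ENNReal.Tendsto.mul_const (ENNReal.tendsto_ofReal
      (vanishesAtSpatialInfinity_scaledTimeIntegral (β := γ / 2) (by linarith) T)) (Or.inr hA)
  have hlim := tendsto_of_tendsto_of_tendsto_of_le_of_le' tendsto_const_nhds hbound
    (Eventually.of_forall fun _ => zero_le) <| (eventually_fst_le T).mono fun p hp =>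
      duhamel_le hγ hγN hγ2 fun r hr => hvA r (hr.le.trans hp)
  simpa [Function.comp_def] using (ENNReal.tendsto_toReal ENNReal.zero_ne_top).comp hlim

lemma toReal_lintegral_duhamelKernel_mul_slice (hv : Measurable v) (hfin : ∀ r, v r ≠ ∞)
    {σ : ℝ} (hσ : σ ∈ Set.Ioo 0 p.1) :
    (∫⁻ y, duhamelKernel γ p (σ, y) * v (σ, y)).toReal
      = ∫ y, heatKernel N (p.1 - σ) (p.2 - y) * ‖y‖ ^ (-γ) * (v (σ, y)).toReal := by
  have hm : Measurable fun y => duhamelKernel γ p (σ, y) * v (σ, y) :=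
    ((measurable_duhamelKernel p).mul hv).comp measurable_prodMk_left
  rw [← integral_toReal hm.aemeasurable (ae_of_all _ fun y =>
    ENNReal.mul_lt_top duhamelKernel_ne_top.lt_top (hfin _).lt_top)]
  refine integral_congr_ae (ae_of_all _ fun y => ?_)
  have hnonneg : 0 ≤ heatKernel N (p.1 - σ) (p.2 - y) * ‖y‖ ^ (-γ) :=
    mul_nonneg (heatKernel_nonneg (sub_pos.2 hσ.2).le _) (by positivity)
  simp only [ENNReal.toReal_mul, duhamelKernel_of_mem (r := (σ, y)) hσ,
    ENNReal.toReal_ofReal hnonneg]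

lemma toReal_duhamel (hv : Measurable v) (hfin : ∀ r, v r ≠ ∞) {t : ℝ} (ht : 0 ≤ t)
    {x : EuclideanSpace ℝ (Fin N)} (hD : duhamel γ v (t, x) ≠ ∞) :
    (duhamel γ v (t, x)).toReal = ∫ σ in (0 : ℝ)..t, ∫ y,
      heatKernel N (t - σ) (x - y) * ‖y‖ ^ (-γ) * (v (σ, y)).toReal := by
  have hm : Measurable fun r => duhamelKernel γ (t, x) r * v r :=
    (measurable_duhamelKernel _).mul hv
  rw [duhamel, Measure.volume_eq_prod, lintegral_prod _ hm.aemeasurable] at hD ⊢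
  rw [← integral_toReal hm.lintegral_prod_right'.aemeasurable
      (ae_lt_top hm.lintegral_prod_right' hD),
    intervalIntegral.integral_of_le ht, integral_Ioc_eq_integral_Ioo,
    ← integral_indicator measurableSet_Ioo]
  refine integral_congr_ae (ae_of_all _ fun σ => ?_)
  by_cases hσ : σ ∈ Set.Ioo 0 t
  · rw [Set.indicator_of_mem hσ]
    exact toReal_lintegral_duhamelKernel_mul_slice (p := (t, x)) hv hfin hσ
  · have hker : ∀ y, duhamelKernel γ (t, x) (σ, y) = 0 := fun y => duhamelKernel_of_notMem hσ
    simp [Set.indicator_of_notMem hσ, hker]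

end Duhamel

section MinimalSolution

variable {N : ℕ} {γ q : ℝ} {g : C₀(EuclideanSpace ℝ (Fin N), ℝ)}

lemma exists_add_mul_rpow_le (hq0 : 0 ≤ q) (hq1 : q < 1) {B K : ℝ≥0∞} (hB : B ≠ ∞) (hK : K ≠ ∞) :
    ∃ M ≠ ∞, B + K * M ^ q ≤ M := by
  have h1q : 0 < 1 - q := sub_pos.2 hq1
  have hL : 1 ≤ B + K + 1 := le_add_self
  have hL' : B + K + 1 ≠ ∞ := by simp [hB, hK]
  set M : ℝ≥0∞ := (B + K + 1) ^ (1 - q)⁻¹ with hM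
  have hM1 : 1 ≤ M := ENNReal.one_le_rpow hL (inv_pos.2 h1q)
  have hM_top : M ≠ ∞ := ENNReal.rpow_ne_top_of_nonneg (inv_nonneg.2 h1q.le) hL'
  have hM_rpow : M ^ (1 - q) = B + K + 1 := by
    rw [hM, ← ENNReal.rpow_mul, inv_mul_cancel₀ h1q.ne', ENNReal.rpow_one]
  have hMq : 1 ≤ M ^ q := by simpa using ENNReal.rpow_le_rpow hM1 hq0
  refine ⟨M, hM_top, ?_⟩
  calc B + K * M ^ q ≤ B * M ^ q + K * M ^ q + M ^ q :=
        le_add_right (by gcongr; exact le_mul_of_one_le_right' hMq)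
    _ = (B + K + 1) * M ^ q := by ring
    _ = M ^ (1 - q) * M ^ q := by rw [hM_rpow]
    _ = M := by
      rw [← ENNReal.rpow_add _ _ (one_pos.trans_le hM1).ne' hM_top, sub_add_cancel,
        ENNReal.rpow_one]

/-- The map `u ↦ G_t * g + ∫₀ᵗ G_{t-σ} * (|·|^{-γ} u(σ)^q) dσ` on `[0, ∞]`-valued functions of
space-time, whose fixed points are the mild solutions with initial datum `g`. -/
noncomputable def picardMap (γ : ℝ) (hq : 0 ≤ q) (g : C₀(EuclideanSpace ℝ (Fin N), ℝ)) :
    (SpaceTime N → ℝ≥0∞) →o (SpaceTime N → ℝ≥0∞) where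
  toFun u p := ENNReal.ofReal (heatFlow g p) + duhamel γ (fun r => u r ^ q) p
  monotone' _ _ huv p := by
    dsimp only
    gcongr
    exact duhamel_mono fun r _ => ENNReal.rpow_le_rpow (huv r) hq

/-- The least `[0, ∞]`-valued mild solution with initial datum `g`, without any measurability
requirement. -/
noncomputable def minimalSolution (γ : ℝ) (hq : 0 ≤ q) (g : C₀(EuclideanSpace ℝ (Fin N), ℝ)) :
    SpaceTime N → ℝ≥0∞ :=
  (picardMap γ hq g).lfp

lemma minimalSolution_eq (hq : 0 ≤ q) (p : SpaceTime N) :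
    minimalSolution γ hq g p
      = ENNReal.ofReal (heatFlow g p) + duhamel γ (fun r => minimalSolution γ hq g r ^ q) p :=
  (congrFun (picardMap γ hq g).map_lfp p).symm

lemma exists_minimalSolution_le (hγ : 0 < γ) (hγN : γ < N) (hγ2 : γ < 2) (hq0 : 0 ≤ q)
    (hq1 : q < 1) (T : ℝ) : ∃ M ≠ ∞, ∀ p, p.1 ≤ T → minimalSolution γ hq0 g p ≤ M := by
  let K := ∫ s, (Set.Ioo 0 T).indicator (fun s => s ^ (-(γ / 2)) * ‖gaussPotential hγ hγN‖) s
  obtain ⟨M, hM_top, hM⟩ := exists_add_mul_rpow_le hq0 hq1 (B := ENNReal.ofReal ‖g‖)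
    (K := ENNReal.ofReal K) ENNReal.ofReal_ne_top ENNReal.ofReal_ne_top
  let s : SpaceTime N → ℝ≥0∞ := fun p => if p.1 ≤ T then M else ∞
  have hs : picardMap γ hq0 g s ≤ s := fun p => by
    by_cases hp : p.1 ≤ T
    · calc picardMap γ hq0 g s p ≤ ENNReal.ofReal ‖g‖ + ENNReal.ofReal K * M ^ q := by
            refine add_le_add (ENNReal.ofReal_le_ofReal (heatFlow_le_norm p)) ?_
            refine (duhamel_le hγ hγN hγ2 (A := M ^ q) fun r hr => ?_).trans ?_
            · simp [s, hr.le.trans hp]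
            · gcongr
              exact scaledTimeIntegral_le (by linarith) hp
        _ ≤ s p := by simpa [s, hp] using hM
    · simp [s, hp]
  exact ⟨M, hM_top, fun p hp => ((picardMap γ hq0 g).lfp_le hs p).trans_eq (if_pos hp)⟩

lemma minimalSolution_ne_top (hγ : 0 < γ) (hγN : γ < N) (hγ2 : γ < 2) (hq0 : 0 ≤ q)
    (hq1 : q < 1) (p : SpaceTime N) : minimalSolution γ hq0 g p ≠ ∞ := by
  obtain ⟨M, hM, hle⟩ := exists_minimalSolution_le (g := g) hγ hγN hγ2 hq0 hq1 p.1
  exact ((hle p le_rfl).trans_lt hM.lt_top).ne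

-- A least fixed point comes with no measurability, but `duhamel` of any function is
-- lower semicontinuous.
lemma measurable_minimalSolution (hq : 0 ≤ q) : Measurable (minimalSolution γ hq g) := by
  rw [funext (minimalSolution_eq hq)]
  exact continuous_heatFlow.measurable.ennreal_ofReal.add (lowerSemicontinuous_duhamel _).measurable

lemma exists_minimalSolution_rpow_le (hγ : 0 < γ) (hγN : γ < N) (hγ2 : γ < 2) (hq0 : 0 ≤ q)
    (hq1 : q < 1) (T : ℝ) : ∃ A ≠ ∞, ∀ p, p.1 ≤ T → minimalSolution γ hq0 g p ^ q ≤ A := by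
  obtain ⟨M, hM, hle⟩ := exists_minimalSolution_le (g := g) hγ hγN hγ2 hq0 hq1 T
  exact ⟨M ^ q, ENNReal.rpow_ne_top_of_nonneg hq0 hM, fun p hp =>
    ENNReal.rpow_le_rpow (hle p hp) hq0⟩

lemma duhamel_minimalSolution_rpow_ne_top (hγ : 0 < γ) (hγN : γ < N) (hγ2 : γ < 2) (hq0 : 0 ≤ q)
    (hq1 : q < 1) (p : SpaceTime N) :
    duhamel γ (fun r => minimalSolution γ hq0 g r ^ q) p ≠ ∞ := fun h =>
  minimalSolution_ne_top (g := g) hγ hγN hγ2 hq0 hq1 p (by rw [minimalSolution_eq, h, add_top])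

lemma toReal_minimalSolution_eq (hγ : 0 < γ) (hγN : γ < N) (hγ2 : γ < 2) (hq0 : 0 ≤ q)
    (hq1 : q < 1) (hg : ∀ x, 0 ≤ g x) (p : SpaceTime N) :
    (minimalSolution γ hq0 g p).toReal
      = heatFlow g p + (duhamel γ (fun r => minimalSolution γ hq0 g r ^ q) p).toReal := by
  conv_lhs => rw [minimalSolution_eq]
  rw [ENNReal.toReal_add ENNReal.ofReal_ne_top
    (duhamel_minimalSolution_rpow_ne_top hγ hγN hγ2 hq0 hq1 p),
    ENNReal.toReal_ofReal (heatFlow_nonneg hg p)]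

lemma toReal_minimalSolution_zero (hγ : 0 < γ) (hγN : γ < N) (hγ2 : γ < 2) (hq0 : 0 ≤ q)
    (hq1 : q < 1) (hg : ∀ x, 0 ≤ g x) (x : EuclideanSpace ℝ (Fin N)) :
    (minimalSolution γ hq0 g (0, x)).toReal = g x := by
  simp [toReal_minimalSolution_eq hγ hγN hγ2 hq0 hq1 hg, duhamel_zero, heatFlow_zero]

lemma continuous_toReal_minimalSolution (hγ : 0 < γ) (hγN : γ < N) (hγ2 : γ < 2) (hq0 : 0 ≤ q)
    (hq1 : q < 1) (hg : ∀ x, 0 ≤ g x) :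
    Continuous fun p => (minimalSolution γ hq0 g p).toReal := by
  simp_rw [toReal_minimalSolution_eq hγ hγN hγ2 hq0 hq1 hg]
  refine continuous_heatFlow.add (ENNReal.continuousOn_toReal.comp_continuous ?_
    (duhamel_minimalSolution_rpow_ne_top hγ hγN hγ2 hq0 hq1))
  exact continuous_duhamel hγ hγN hγ2 ((measurable_minimalSolution hq0).pow_const q)
    (exists_minimalSolution_rpow_le hγ hγN hγ2 hq0 hq1)

lemma vanishesAtSpatialInfinity_toReal_minimalSolution (hγ : 0 < γ) (hγN : γ < N) (hγ2 : γ < 2)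
    (hq0 : 0 ≤ q) (hq1 : q < 1) (hg : ∀ x, 0 ≤ g x) :
    VanishesAtSpatialInfinity fun p => (minimalSolution γ hq0 g p).toReal := fun T => by
  simp_rw [toReal_minimalSolution_eq hγ hγN hγ2 hq0 hq1 hg]
  simpa using (vanishesAtSpatialInfinity_heatFlow T).add
    (vanishesAtSpatialInfinity_toReal_duhamel hγ hγN hγ2
      (exists_minimalSolution_rpow_le hγ hγN hγ2 hq0 hq1) T)

lemma toReal_minimalSolution_eq_integral (hγ : 0 < γ) (hγN : γ < N) (hγ2 : γ < 2) (hq0 : 0 ≤ q)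
    (hq1 : q < 1) (hg : ∀ x, 0 ≤ g x) {t : ℝ} (ht : 0 < t) (x : EuclideanSpace ℝ (Fin N)) :
    (minimalSolution γ hq0 g (t, x)).toReal = (∫ y, heatKernel N t (x - y) * g y) +
      ∫ σ in (0 : ℝ)..t, ∫ y, heatKernel N (t - σ) (x - y) * ‖y‖ ^ (-γ) *
        (minimalSolution γ hq0 g (σ, y)).toReal ^ q := by
  rw [toReal_minimalSolution_eq hγ hγN hγ2 hq0 hq1 hg, heatFlow_eq_integral ht,
    toReal_duhamel ((measurable_minimalSolution hq0).pow_const q)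
      (fun r => ENNReal.rpow_ne_top_of_nonneg hq0 (minimalSolution_ne_top hγ hγN hγ2 hq0 hq1 r))
      ht.le (duhamel_minimalSolution_rpow_ne_top hγ hγN hγ2 hq0 hq1 _)]
  simp_rw [← ENNReal.toReal_rpow]

end MinimalSolution

end HeatEquation

open HeatEquation

/-- Existence of a non-negative global solution of `u_t - Δu = |x|^{-γ} u^q`,
`0 < q < 1`, `0 < γ < min{2,N}`, with non-negative initial data
`u₀ ∈ C₀(ℝ^N)`, in the mild (integral) formulation. -/
theorem existence_global_solution (N : ℕ) (hN : 1 ≤ N) (q γ : ℝ)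
    (hq0 : 0 < q) (hq1 : q < 1) (hγ0 : 0 < γ) (hγ : γ < min 2 (N : ℝ))
    (u₀ : EuclideanSpace ℝ (Fin N) → ℝ)
    (hu₀c : Continuous u₀)
    (hu₀v : Tendsto u₀ (cocompact (EuclideanSpace ℝ (Fin N))) (nhds 0))
    (hu₀nn : ∀ x, 0 ≤ u₀ x) :
    ∃ u : EuclideanSpace ℝ (Fin N) → ℝ → ℝ,
      -- u is non-negative
      (∀ x t, 0 ≤ t → 0 ≤ u x t) ∧
      -- for every t ≥ 0, x ↦ u(x,t) is continuous and vanishes at infinity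
      (∀ t, 0 ≤ t → Continuous (fun x => u x t)) ∧
      (∀ t, 0 ≤ t → Tendsto (fun x => u x t)
        (cocompact (EuclideanSpace ℝ (Fin N))) (nhds 0)) ∧
      -- t ↦ u(·,t) is continuous from [0,∞) into (C₀, sup norm)
      (∀ t₀, 0 ≤ t₀ → ∀ ε > (0 : ℝ), ∃ δ > (0 : ℝ), ∀ t, 0 ≤ t → |t - t₀| < δ →
        ∀ x, |u x t - u x t₀| ≤ ε) ∧
      -- initial condition (the integral equation at t = 0)
      (∀ x, u x 0 = u₀ x) ∧
      -- the integral equation for t > 0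
      (∀ t, 0 < t → ∀ x,
        u x t = (∫ y, heatKernel N t (x - y) * u₀ y) +
          ∫ σ in (0 : ℝ)..t, ∫ y,
            heatKernel N (t - σ) (x - y) * ‖y‖ ^ (-γ) * u y σ ^ q) := by
  have hγ2 : γ < 2 := hγ.trans_le (min_le_left _ _)
  have hγN : γ < N := hγ.trans_le (min_le_right _ _)
  let g : ZeroAtInftyContinuousMap (EuclideanSpace ℝ (Fin N)) ℝ := ⟨⟨u₀, hu₀c⟩, hu₀v⟩
  have hcont := continuous_toReal_minimalSolution (g := g) hγ0 hγN hγ2 hq0.le hq1 hu₀nn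
  have hvanish :=
    vanishesAtSpatialInfinity_toReal_minimalSolution (g := g) hγ0 hγN hγ2 hq0.le hq1 hu₀nn
  refine ⟨fun x t => (minimalSolution γ hq0.le g (t, x)).toReal,
    fun _ _ _ => ENNReal.toReal_nonneg, fun t _ => hcont.comp (Continuous.prodMk_right t),
    fun t _ => hvanish.tendsto t, fun t₀ _ ε hε => ?_,
    toReal_minimalSolution_zero (g := g) hγ0 hγN hγ2 hq0.le hq1 hu₀nn,
    fun t ht => toReal_minimalSolution_eq_integral (g := g) hγ0 hγN hγ2 hq0.le hq1 hu₀nn ht⟩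
  obtain ⟨δ, hδ, hunif⟩ := Metric.eventually_nhds_iff.1
    (Metric.tendstoUniformly_iff.1 (hvanish.tendstoUniformly hcont t₀) ε hε)
  refine ⟨δ, hδ, fun t _ ht x => ?_⟩
  rw [abs_sub_comm]
  exact (hunif ht x).le
end

section
/- Let N ≥ 1, 0 < q < 1 and 0 < γ < min{2, N}. Set η₀ = (4π)^{−N/2} ∫_{ℝ^N} exp(−|z|²/4) (1+|z|)^{−γ/(1−q)} dz and λ = [(1−q) η₀]^{1/(1−q)}, and define w(x,t) = λ t^{1/(1−q)} (|x| + √t)^{−γ/(1−q)} for t > 0, with w(x,0) = 0. Then: (a) for every t ≥ 0 the map x ↦ w(x,t) is continuous and vanishes at infinity, sup_x |w(x,t)| ≤ λ t^{(1−γ/2)/(1−q)}, and t ↦ w(·,t) is continuous into the bounded continuous functions with the sup norm; (b) for all t > 0 and x ∈ ℝ^N one has w(x,t) ≤ ∫₀ᵗ ∫_{ℝ^N} G_{t−σ}(x−y) |y|^{−γ} w(y,σ)^q dy dσ, i.e., w is a sub-solution of the integral equation with zero initial data. -/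
open MeasureTheory Filter Real

/-!
Put `a = γ / (1 - q)` and `m = q / (1 - q)`, so that `w = λ S` with
`S(x, t) = t ^ (m + 1) (|x| + √t) ^ (-a)`. The triangle inequality gives
`|y| + √σ ≤ (|x| + √t) (1 + |x - y| / √(t - σ))` for `0 ≤ σ < t`; together with
`|y| ^ (-γ) ≥ (|y| + √σ) ^ (-γ)` it bounds the source term `|y| ^ (-γ) w(y, σ) ^ q` from below by
`λ ^ q σ ^ m (|x| + √t) ^ (-a) (1 + |x - y| / √(t - σ)) ^ (-a)`. The heat kernel averages the last
factor to the constant `η₀`, and `∫₀ᵗ σ ^ m dσ = (1 - q) t ^ (m + 1)`. Hence the Duhamel integral is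
at least `λ ^ q (1 - q) η₀ S(x, t)`, and `λ` is chosen so that `λ ^ q (1 - q) η₀ = λ`. The Duhamel
integral converges since `∫ G_s(x - y) |y| ^ (-γ) dy ≤ C s ^ (-γ / 2)` and `γ < 2`.
-/

open scoped Topology

section SelfSimilar

variable {E : Type*} [NormedAddCommGroup E] {p a t t₀ : ℝ}

/-- The self-similar function `t ^ p (‖x‖ + √t) ^ (-a)`; the function `w` of the theorem is
`λ` times the case `p = 1 / (1 - q)`, `a = γ / (1 - q)`. At `t = 0` the factor `0 ^ p = 0` (for
`p ≠ 0`) makes it vanish, also at `x = 0`, where the second factor has a junk value. -/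
noncomputable def selfSimilar (p a : ℝ) (x : E) (t : ℝ) : ℝ :=
  t ^ p * (‖x‖ + √t) ^ (-a)

lemma selfSimilar_zero_right (hp : p ≠ 0) (x : E) : selfSimilar p a x 0 = 0 := by
  rw [selfSimilar, zero_rpow hp, zero_mul]

lemma selfSimilar_nonneg (ht : 0 ≤ t) (x : E) : 0 ≤ selfSimilar p a x t :=
  mul_nonneg (rpow_nonneg ht p) (by positivity)

lemma selfSimilar_rpow (ht : 0 ≤ t) (r : ℝ) (x : E) :
    selfSimilar p a x t ^ r = selfSimilar (p * r) (a * r) x t := by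
  simp only [selfSimilar]
  rw [mul_rpow (by positivity) (by positivity), ← rpow_mul ht, ← rpow_mul (by positivity),
    neg_mul]

lemma sqrt_rpow_neg (ht : 0 ≤ t) (a : ℝ) : √t ^ (-a) = t ^ (-(a / 2)) := by
  rw [sqrt_eq_rpow, ← rpow_mul ht]
  ring_nf

lemma selfSimilar_le (ha : 0 ≤ a) (ht : 0 < t) (x : E) :
    selfSimilar p a x t ≤ t ^ (p - a / 2) := by
  have hs : 0 < √t := sqrt_pos.2 ht
  calc t ^ p * (‖x‖ + √t) ^ (-a) ≤ t ^ p * √t ^ (-a) := by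
        gcongr ?_ * ?_
        exact rpow_le_rpow_of_nonpos hs (by simp) (by simpa)
    _ = t ^ (p - a / 2) := by rw [sqrt_rpow_neg ht.le, ← rpow_add ht, sub_eq_add_neg]

lemma abs_selfSimilar_le (hp : p ≠ 0) (ha : 0 ≤ a) (ht : 0 ≤ t) (x : E) :
    |selfSimilar p a x t| ≤ t ^ (p - a / 2) := by
  rw [abs_of_nonneg (selfSimilar_nonneg ht x)]
  rcases ht.eq_or_lt with rfl | ht
  · rw [selfSimilar_zero_right hp]
    positivity
  · exact selfSimilar_le ha ht x

lemma continuous_selfSimilar (hp : p ≠ 0) (ht : 0 ≤ t) :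
    Continuous fun x : E => selfSimilar p a x t := by
  rcases ht.eq_or_lt with rfl | ht
  · simpa only [selfSimilar_zero_right hp] using continuous_const
  · have hs : 0 < √t := sqrt_pos.2 ht
    exact continuous_const.mul ((continuous_norm.add continuous_const).rpow_const
      fun x => Or.inl (add_pos_of_nonneg_of_pos (norm_nonneg x) hs).ne')

lemma tendsto_selfSimilar_cocompact [ProperSpace E] (ha : 0 < a) :
    Tendsto (fun x : E => selfSimilar p a x t) (cocompact E) (𝓝 0) := by
  have h := (tendsto_rpow_neg_atTop ha).comp
    (tendsto_atTop_add_const_right _ √t (tendsto_norm_cocompact_atTop (E := E)))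
  simpa only [selfSimilar, mul_zero] using! h.const_mul (t ^ p)

lemma measurable_selfSimilar [MeasurableSpace E] [OpensMeasurableSpace E] :
    Measurable fun u : ℝ × E => selfSimilar p a u.2 u.1 := by
  unfold selfSimilar
  fun_prop

lemma abs_add_rpow_neg_sub_le {r s s' : ℝ} (ha : 0 ≤ a) (hr : 0 ≤ r) (hs : 0 < s) (hs' : 0 < s') :
    |(r + s) ^ (-a) - (r + s') ^ (-a)| ≤ |s ^ (-a) - s' ^ (-a)| := by
  wlog hss' : s ≤ s' generalizing s s'
  · rw [abs_sub_comm, abs_sub_comm (s ^ (-a))]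
    exact this hs' hs (le_of_not_ge hss')
  have ha' : -a ≤ 0 := neg_nonpos.2 ha
  have hle : (r + s') ^ (-a) ≤ (r + s) ^ (-a) :=
    rpow_le_rpow_of_nonpos (by positivity) (by gcongr) ha'
  have hle₀ : s' ^ (-a) ≤ s ^ (-a) := rpow_le_rpow_of_nonpos hs hss' ha'
  have hratio_le : (s' / s) ^ (-a) ≤ 1 :=
    rpow_le_one_of_one_le_of_nonpos ((one_le_div hs).2 hss') ha'
  have hratio : (s' / s) ^ (-a) * (r + s) ^ (-a) ≤ (r + s') ^ (-a) := by
    rw [← mul_rpow (by positivity) (by positivity)]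
    refine rpow_le_rpow_of_nonpos (by positivity) ?_ ha'
    rw [mul_add, div_mul_cancel₀ _ hs.ne']
    gcongr
    exact le_mul_of_one_le_left hr ((one_le_div hs).2 hss')
  rw [abs_of_nonneg (sub_nonneg.2 hle), abs_of_nonneg (sub_nonneg.2 hle₀)]
  calc (r + s) ^ (-a) - (r + s') ^ (-a)
      ≤ (1 - (s' / s) ^ (-a)) * (r + s) ^ (-a) := by linarith
    _ ≤ (1 - (s' / s) ^ (-a)) * s ^ (-a) := by
        refine mul_le_mul_of_nonneg_left ?_ (sub_nonneg.2 hratio_le)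
        exact rpow_le_rpow_of_nonpos hs (by linarith) ha'
    _ = s ^ (-a) - s' ^ (-a) := by
        rw [sub_mul, one_mul, ← mul_rpow (by positivity) hs.le, div_mul_cancel₀ _ hs.ne']

lemma abs_selfSimilar_sub_le (ha : 0 ≤ a) (ht : 0 < t) (ht₀ : 0 < t₀) (x : E) :
    |selfSimilar p a x t - selfSimilar p a x t₀| ≤
      |t ^ p - t₀ ^ p| * √t ^ (-a) + t₀ ^ p * |√t ^ (-a) - √t₀ ^ (-a)| := by
  have hs : 0 < √t := sqrt_pos.2 ht
  have hsplit : selfSimilar p a x t - selfSimilar p a x t₀ = (t ^ p - t₀ ^ p) * (‖x‖ + √t) ^ (-a) +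
      t₀ ^ p * ((‖x‖ + √t) ^ (-a) - (‖x‖ + √t₀) ^ (-a)) := by
    unfold selfSimilar
    ring
  rw [hsplit]
  refine (abs_add_le _ _).trans ?_
  rw [abs_mul, abs_mul, abs_of_nonneg (by positivity : 0 ≤ (‖x‖ + √t) ^ (-a)),
    abs_of_nonneg (by positivity : 0 ≤ t₀ ^ p)]
  gcongr ?_ * ?_ + _ * ?_
  · exact rpow_le_rpow_of_nonpos hs (by simp) (by simpa)
  · exact abs_add_rpow_neg_sub_le ha (norm_nonneg x) hs (sqrt_pos.2 ht₀)

lemma tendstoUniformly_selfSimilar_of_pos (ha : 0 ≤ a) (ht₀ : 0 < t₀) :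
    TendstoUniformly (fun t (x : E) => selfSimilar p a x t) (fun x => selfSimilar p a x t₀)
      (𝓝 t₀) := by
  have hpow : ContinuousAt (fun t : ℝ => t ^ p) t₀ := continuousAt_rpow_const _ _ (Or.inl ht₀.ne')
  have hsqrt : ContinuousAt (fun t : ℝ => √t ^ (-a)) t₀ :=
    continuous_sqrt.continuousAt.rpow_const (Or.inl (sqrt_pos.2 ht₀).ne')
  have hbound : ContinuousAt
      (fun t => |t ^ p - t₀ ^ p| * √t ^ (-a) + t₀ ^ p * |√t ^ (-a) - √t₀ ^ (-a)|) t₀ := by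
    fun_prop
  rw [Metric.tendstoUniformly_iff]
  intro ε hε
  filter_upwards [lt_mem_nhds ht₀, hbound.eventually_lt_const (by simpa using hε)]
    with t ht hlt x
  rw [dist_comm, dist_eq]
  exact (abs_selfSimilar_sub_le ha ht ht₀ x).trans_lt hlt

lemma tendstoUniformly_selfSimilar_zero (ha : 0 ≤ a) (hpa : a / 2 < p) :
    TendstoUniformly (fun t (x : E) => selfSimilar p a x t) (fun x => selfSimilar p a x 0)
      (𝓝[≥] 0) := by
  have hp : p ≠ 0 := ((div_nonneg ha zero_le_two).trans_lt hpa).ne'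
  have hpa' : 0 < p - a / 2 := sub_pos.2 hpa
  have hbound : ContinuousAt (fun t : ℝ => t ^ (p - a / 2)) 0 :=
    continuousAt_rpow_const _ _ (Or.inr hpa'.le)
  rw [Metric.tendstoUniformly_iff]
  intro ε hε
  filter_upwards [self_mem_nhdsWithin, mem_nhdsWithin_of_mem_nhds
    (hbound.eventually_lt_const (by simpa only [zero_rpow hpa'.ne'] using hε))] with t ht hlt x
  rw [selfSimilar_zero_right hp, dist_zero_left, norm_eq_abs]
  exact (abs_selfSimilar_le hp ha ht x).trans_lt hlt

lemma tendstoUniformly_selfSimilar (ha : 0 ≤ a) (hpa : a / 2 < p) (ht₀ : 0 ≤ t₀) :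
    TendstoUniformly (fun t (x : E) => selfSimilar p a x t) (fun x => selfSimilar p a x t₀)
      (𝓝[Set.Ici 0] t₀) := by
  rcases ht₀.eq_or_lt with rfl | ht₀
  · exact tendstoUniformly_selfSimilar_zero ha hpa
  · exact fun u hu => nhdsWithin_le_nhds (tendstoUniformly_selfSimilar_of_pos ha ht₀ u hu)

lemma exists_forall_abs_sub_le_of_tendstoUniformly {α : Type*} {f : ℝ → α → ℝ} {s : Set ℝ} {ε : ℝ}
    (hf : TendstoUniformly f (f t₀) (𝓝[s] t₀)) (hε : 0 < ε) :
    ∃ δ > 0, ∀ t ∈ s, |t - t₀| < δ → ∀ x, |f t x - f t₀ x| ≤ ε := by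
  obtain ⟨δ, hδ, h⟩ := Metric.mem_nhdsWithin_iff.1 (Metric.tendstoUniformly_iff.1 hf ε hε)
  refine ⟨δ, hδ, fun t hts htδ x => ?_⟩
  rw [← dist_eq, dist_comm]
  exact (h ⟨htδ, hts⟩ x).le

lemma eq_mul_selfSimilar_of_eq_zero {w : E → ℝ → ℝ} {l : ℝ} (hp : p ≠ 0) (hw0 : ∀ x, w x 0 = 0)
    (hw : ∀ x t, 0 < t → w x t = l * t ^ p * (‖x‖ + √t) ^ (-a)) :
    ∀ t, 0 ≤ t → ∀ x, w x t = l * selfSimilar p a x t := by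
  intro t ht x
  rcases ht.eq_or_lt with rfl | ht
  · rw [hw0, selfSimilar_zero_right hp, mul_zero]
  · rw [hw x t ht, selfSimilar, mul_assoc]

lemma selfSimilar_add_le_norm_rpow_neg_mul {γ : ℝ} (hγ : 0 ≤ γ) (ht : 0 ≤ t) {x : E} (hx : x ≠ 0) :
    selfSimilar p (γ + a) x t ≤ ‖x‖ ^ (-γ) * selfSimilar p a x t := by
  have hx' : 0 < ‖x‖ := norm_pos_iff.2 hx
  calc selfSimilar p (γ + a) x t = (‖x‖ + √t) ^ (-γ) * selfSimilar p a x t := by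
        rw [selfSimilar, selfSimilar, neg_add, rpow_add (by positivity)]
        ring
    _ ≤ ‖x‖ ^ (-γ) * selfSimilar p a x t := by
        gcongr ?_ * ?_
        · exact selfSimilar_nonneg ht x
        · exact rpow_le_rpow_of_nonpos hx' (by simp) (by simpa)

lemma norm_add_sqrt_le_mul {σ : ℝ} (hσ : 0 ≤ σ) (hσt : σ < t) (x y : E) :
    ‖y‖ + √σ ≤ (‖x‖ + √t) * (1 + ‖x - y‖ / √(t - σ)) := by
  have hs : 0 < √(t - σ) := sqrt_pos.2 (sub_pos.2 hσt)
  have htri : ‖y‖ ≤ ‖x‖ + ‖x - y‖ := by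
    simpa only [sub_sub_cancel] using norm_sub_le x (x - y)
  have hdiv : ‖x - y‖ ≤ (‖x‖ + √t) * (‖x - y‖ / √(t - σ)) := by
    rw [mul_div_left_comm]
    refine le_mul_of_one_le_right (norm_nonneg _) ((one_le_div hs).2 ?_)
    calc √(t - σ) ≤ √t := sqrt_le_sqrt (by linarith)
      _ ≤ ‖x‖ + √t := by simp
  linarith [sqrt_le_sqrt hσt.le]

lemma mul_one_add_rpow_neg_le_selfSimilar {σ : ℝ} (ha : 0 ≤ a) (hσ : 0 < σ) (hσt : σ < t)
    (x y : E) :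
    σ ^ p * (‖x‖ + √t) ^ (-a) * (1 + ‖x - y‖ / √(t - σ)) ^ (-a) ≤ selfSimilar p a y σ := by
  have hs : 0 < √σ := sqrt_pos.2 hσ
  rw [mul_assoc, ← mul_rpow (by positivity) (by positivity)]
  refine mul_le_mul_of_nonneg_left ?_ (by positivity)
  exact rpow_le_rpow_of_nonpos (add_pos_of_nonneg_of_pos (norm_nonneg y) hs)
    (norm_add_sqrt_le_mul hσ.le hσt x y) (neg_nonpos.2 ha)

end SelfSimilar

section SingularPart

variable {E : Type*} [NormedAddCommGroup E] {γ B : ℝ} {K : E → ℝ}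

/-- The restriction of `‖z‖ ^ (-γ)` to the unit ball, extended by zero: for `0 ≤ γ < dim E` it is
integrable, and what is left of `‖z‖ ^ (-γ)` is bounded by `1`. -/
noncomputable def singularPart (γ : ℝ) : E → ℝ :=
  (Metric.ball 0 1).indicator fun z => ‖z‖ ^ (-γ)

lemma singularPart_nonneg (z : E) : 0 ≤ singularPart γ z :=
  Set.indicator_nonneg (fun _ _ => by positivity) z

lemma norm_rpow_neg_le_one_add_singularPart (hγ : 0 ≤ γ) (z : E) :
    ‖z‖ ^ (-γ) ≤ 1 + singularPart γ z := by
  by_cases hz : z ∈ Metric.ball (0 : E) 1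
  · rw [singularPart, Set.indicator_of_mem hz]
    exact le_add_of_nonneg_left zero_le_one
  · have hz' : 1 ≤ ‖z‖ := by simpa using hz
    exact (rpow_le_one_of_one_le_of_nonpos hz' (neg_nonpos.2 hγ)).trans
      (le_add_of_nonneg_right (singularPart_nonneg z))

lemma mul_norm_sub_rpow_neg_le (hγ : 0 ≤ γ) (hK : ∀ z, 0 ≤ K z) (hKB : ∀ z, K z ≤ B) (v z : E) :
    K z * ‖v - z‖ ^ (-γ) ≤ K z + B * singularPart γ (v - z) :=
  calc K z * ‖v - z‖ ^ (-γ) ≤ K z * (1 + singularPart γ (v - z)) :=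
        mul_le_mul_of_nonneg_left (norm_rpow_neg_le_one_add_singularPart hγ _) (hK z)
    _ = K z + K z * singularPart γ (v - z) := by ring
    _ ≤ K z + B * singularPart γ (v - z) := by
        gcongr
        · exact singularPart_nonneg _
        · exact hKB z

variable [NormedSpace ℝ E] [FiniteDimensional ℝ E] [MeasurableSpace E] [BorelSpace E]
  {μ : Measure E} [μ.IsAddHaarMeasure]

lemma integrable_singularPart (hγ : 0 ≤ γ) (hγE : γ < Module.finrank ℝ E) :
    Integrable (singularPart γ : E → ℝ) μ := by
  have hdim : 1 ≤ Module.finrank ℝ E := by exact_mod_cast hγ.trans_lt hγE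
  rw [singularPart, integrable_indicator_iff Metric.isOpen_ball.measurableSet]
  refine integrableOn_ball_of_norm_le_rpow (C := 1) hdim hγE (Eventually.of_forall fun z => ?_)
    (measurable_norm.pow_const _).aestronglyMeasurable
  rw [one_mul, norm_of_nonneg (by positivity)]

lemma integrable_add_mul_singularPart (hγ : 0 ≤ γ) (hγE : γ < Module.finrank ℝ E)
    (hKint : Integrable K μ) (v : E) :
    Integrable (fun z => K z + B * singularPart γ (v - z)) μ :=
  hKint.add (((integrable_singularPart hγ hγE).comp_sub_left v).const_mul B)

lemma integrable_mul_norm_sub_rpow_neg (hγ : 0 ≤ γ) (hγE : γ < Module.finrank ℝ E)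
    (hK : ∀ z, 0 ≤ K z) (hKB : ∀ z, K z ≤ B) (hKint : Integrable K μ) (v : E) :
    Integrable (fun z => K z * ‖v - z‖ ^ (-γ)) μ := by
  have hmeas : Measurable fun z : E => ‖v - z‖ ^ (-γ) := by fun_prop
  refine (integrable_add_mul_singularPart (B := B) hγ hγE hKint v).mono'
    (hKint.aestronglyMeasurable.mul hmeas.aestronglyMeasurable) (Eventually.of_forall fun z => ?_)
  rw [norm_of_nonneg (mul_nonneg (hK z) (by positivity))]
  exact mul_norm_sub_rpow_neg_le hγ hK hKB v z

lemma integral_mul_norm_sub_rpow_neg_le (hγ : 0 ≤ γ) (hγE : γ < Module.finrank ℝ E)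
    (hK : ∀ z, 0 ≤ K z) (hKB : ∀ z, K z ≤ B) (hKint : Integrable K μ) (v : E) :
    ∫ z, K z * ‖v - z‖ ^ (-γ) ∂μ ≤ ∫ z, K z ∂μ + B * ∫ z : E, singularPart γ z ∂μ :=
  calc ∫ z, K z * ‖v - z‖ ^ (-γ) ∂μ ≤ ∫ z, (K z + B * singularPart γ (v - z)) ∂μ :=
        integral_mono (integrable_mul_norm_sub_rpow_neg hγ hγE hK hKB hKint v)
          (integrable_add_mul_singularPart hγ hγE hKint v)
          fun z => mul_norm_sub_rpow_neg_le hγ hK hKB v z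
    _ = ∫ z, K z ∂μ + B * ∫ z : E, singularPart γ z ∂μ := by
        rw [integral_add hKint (((integrable_singularPart hγ hγE).comp_sub_left v).const_mul B),
          integral_const_mul, integral_sub_left_eq_self (singularPart γ) μ v]

end SingularPart

section HeatSemigroup

variable {N : ℕ} {s γ : ℝ}

lemma heatKernel_nonneg (hs : 0 ≤ s) (x : EuclideanSpace ℝ (Fin N)) : 0 ≤ heatKernel N s x := by
  unfold heatKernel
  positivity

lemma heatKernel_le (hs : 0 ≤ s) (x : EuclideanSpace ℝ (Fin N)) :
    heatKernel N s x ≤ (4 * π * s) ^ (-(N : ℝ) / 2) := by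
  refine mul_le_of_le_one_right (by positivity) (exp_le_one_iff.2 ?_)
  exact div_nonpos_of_nonpos_of_nonneg (by simp) (by positivity)

lemma measurable_heatKernel :
    Measurable fun u : ℝ × EuclideanSpace ℝ (Fin N) => heatKernel N u.1 u.2 := by
  unfold heatKernel
  fun_prop

lemma integrable_heatKernel (hs : 0 < s) : Integrable (heatKernel N s) := by
  have h : Integrable fun x : EuclideanSpace ℝ (Fin N) => exp (-(1 / (4 * s)) * ‖x‖ ^ 2) := by
    refine Integrable.of_integral_ne_zero ?_
    rw [GaussianFourier.integral_rexp_neg_mul_sq_norm (by positivity)]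
    positivity
  refine (h.const_mul ((4 * π * s) ^ (-(N : ℝ) / 2))).congr (Eventually.of_forall fun x => ?_)
  simp only [heatKernel]
  ring_nf

lemma heatKernel_sqrt_smul (hs : 0 < s) (z : EuclideanSpace ℝ (Fin N)) :
    heatKernel N s (√s • z) = (√s ^ N)⁻¹ * heatKernel N 1 z := by
  have hpow : s ^ (-(N : ℝ) / 2) = (√s ^ N)⁻¹ := by
    rw [neg_div, ← sqrt_rpow_neg hs.le, rpow_neg (sqrt_nonneg s), rpow_natCast]
  have hexp : -(√s * ‖z‖) ^ 2 / (4 * s) = -‖z‖ ^ 2 / (4 * 1) := by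
    rw [mul_pow, sq_sqrt hs.le]
    field_simp
  rw [heatKernel, heatKernel, norm_smul, norm_of_nonneg (sqrt_nonneg s), hexp,
    mul_rpow (by positivity) hs.le, hpow, mul_one (4 * π)]
  ring

/-- The heat semigroup on `ℝ^N`: the value at `x` of the solution at time `s` of the heat equation
with initial datum `f`. -/
noncomputable def heatSemigroup (s : ℝ) (f : EuclideanSpace ℝ (Fin N) → ℝ)
    (x : EuclideanSpace ℝ (Fin N)) : ℝ :=
  ∫ y, heatKernel N s (x - y) * f y

lemma heatSemigroup_eq_integral_sub_sqrt_smul (hs : 0 < s) (f : EuclideanSpace ℝ (Fin N) → ℝ)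
    (x : EuclideanSpace ℝ (Fin N)) :
    heatSemigroup s f x = ∫ z, heatKernel N 1 z * f (x - √s • z) := by
  have hpos : 0 < √s ^ N := pow_pos (sqrt_pos.2 hs) N
  calc heatSemigroup s f x = ∫ y, heatKernel N s y * f (x - y) := by
        rw [heatSemigroup, ← integral_sub_left_eq_self _ volume x]
        simp only [sub_sub_cancel]
    _ = √s ^ N * ∫ z, heatKernel N s (√s • z) * f (x - √s • z) := by
        rw [Measure.integral_comp_smul volume (fun y => heatKernel N s y * f (x - y)),
          finrank_euclideanSpace_fin, abs_of_pos (inv_pos.2 hpos), smul_eq_mul,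
          mul_inv_cancel_left₀ hpos.ne']
    _ = ∫ z, heatKernel N 1 z * f (x - √s • z) := by
        rw [← integral_const_mul]
        simp only [heatKernel_sqrt_smul hs, mul_assoc, mul_inv_cancel_left₀ hpos.ne']

lemma heatSemigroup_nonneg (hs : 0 ≤ s) {f : EuclideanSpace ℝ (Fin N) → ℝ} (hf : ∀ y, 0 ≤ f y)
    (x : EuclideanSpace ℝ (Fin N)) : 0 ≤ heatSemigroup s f x :=
  integral_nonneg fun y => mul_nonneg (heatKernel_nonneg hs _) (hf y)

lemma heatSemigroup_mono (hs : 0 ≤ s) {f g : EuclideanSpace ℝ (Fin N) → ℝ} (hf : ∀ y, 0 ≤ f y)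
    (hfg : f ≤ᵐ[volume] g) {x : EuclideanSpace ℝ (Fin N)}
    (hg : Integrable fun y => heatKernel N s (x - y) * g y) :
    heatSemigroup s f x ≤ heatSemigroup s g x := by
  refine integral_mono_of_nonneg (Eventually.of_forall fun y => ?_) hg ?_
  · exact mul_nonneg (heatKernel_nonneg hs _) (hf y)
  · filter_upwards [hfg] with y hy
    exact mul_le_mul_of_nonneg_left hy (heatKernel_nonneg hs _)

lemma heatSemigroup_const_mul (c : ℝ) (f : EuclideanSpace ℝ (Fin N) → ℝ)
    (x : EuclideanSpace ℝ (Fin N)) :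
    heatSemigroup s (fun y => c * f y) x = c * heatSemigroup s f x := by
  simp only [heatSemigroup, mul_left_comm _ c, integral_const_mul]

lemma stronglyMeasurable_heatSemigroup {f : EuclideanSpace ℝ (Fin N) → ℝ → ℝ}
    (hf : Measurable fun u : ℝ × EuclideanSpace ℝ (Fin N) => f u.2 u.1) (t : ℝ)
    (x : EuclideanSpace ℝ (Fin N)) :
    StronglyMeasurable fun σ => heatSemigroup (t - σ) (f · σ) x := by
  refine StronglyMeasurable.integral_prod_right (Measurable.stronglyMeasurable ?_)
  exact (measurable_heatKernel.comp (by fun_prop : Measurable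
    fun u : ℝ × EuclideanSpace ℝ (Fin N) => (t - u.1, x - u.2))).mul hf

lemma integrable_heatKernel_mul_norm_rpow_neg (hs : 0 < s) (hγ : 0 ≤ γ) (hγN : γ < N)
    (x : EuclideanSpace ℝ (Fin N)) :
    Integrable fun y => heatKernel N s (x - y) * ‖y‖ ^ (-γ) := by
  simpa using integrable_mul_norm_sub_rpow_neg hγ (by simpa using hγN)
    (fun y => heatKernel_nonneg hs.le (x - y)) (fun y => heatKernel_le hs.le (x - y))
    ((integrable_heatKernel hs).comp_sub_left x) 0

lemma exists_heatSemigroup_norm_rpow_neg_le (hγ : 0 ≤ γ) (hγN : γ < N) :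
    ∃ C, ∀ s > 0, ∀ x : EuclideanSpace ℝ (Fin N),
      heatSemigroup s (fun y => ‖y‖ ^ (-γ)) x ≤ C * s ^ (-(γ / 2)) := by
  obtain ⟨C, hC⟩ : ∃ C, ∀ v : EuclideanSpace ℝ (Fin N),
      ∫ z, heatKernel N 1 z * ‖v - z‖ ^ (-γ) ≤ C :=
    ⟨_, integral_mul_norm_sub_rpow_neg_le hγ (by simpa using hγN)
      (heatKernel_nonneg zero_le_one) (heatKernel_le zero_le_one) (integrable_heatKernel one_pos)⟩
  refine ⟨C, fun s hs x => ?_⟩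
  have hsqrt : √s ≠ 0 := (sqrt_pos.2 hs).ne'
  have hscale : ∀ z, ‖x - √s • z‖ ^ (-γ) = s ^ (-(γ / 2)) * ‖(√s)⁻¹ • x - z‖ ^ (-γ) := fun z =>
    calc ‖x - √s • z‖ ^ (-γ) = ‖√s • ((√s)⁻¹ • x - z)‖ ^ (-γ) := by
          rw [smul_sub, smul_inv_smul₀ hsqrt]
      _ = s ^ (-(γ / 2)) * ‖(√s)⁻¹ • x - z‖ ^ (-γ) := by
          rw [norm_smul, norm_of_nonneg (sqrt_nonneg s), mul_rpow (sqrt_nonneg s) (norm_nonneg _),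
            sqrt_rpow_neg hs.le]
  rw [heatSemigroup_eq_integral_sub_sqrt_smul hs, mul_comm]
  simp only [hscale, mul_left_comm (heatKernel N 1 _), integral_const_mul]
  exact mul_le_mul_of_nonneg_left (hC _) (by positivity)

/-- The constant `η₀` of the theorem, for the exponent `a = γ / (1 - q)`. -/
noncomputable def gaussianAverage (N : ℕ) (a : ℝ) : ℝ :=
  ∫ z : EuclideanSpace ℝ (Fin N), heatKernel N 1 z * (1 + ‖z‖) ^ (-a)

lemma gaussianAverage_eq (N : ℕ) (a : ℝ) :
    gaussianAverage N a = (4 * π) ^ (-(N : ℝ) / 2) *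
      ∫ z : EuclideanSpace ℝ (Fin N), exp (-‖z‖ ^ 2 / 4) * (1 + ‖z‖) ^ (-a) := by
  simp only [gaussianAverage, heatKernel, mul_one, mul_assoc, integral_const_mul]

lemma gaussianAverage_nonneg (N : ℕ) (a : ℝ) : 0 ≤ gaussianAverage N a :=
  integral_nonneg fun z => mul_nonneg (heatKernel_nonneg zero_le_one z) (by positivity)

lemma heatSemigroup_one_add_norm_div_sqrt_rpow_neg (hs : 0 < s) (a : ℝ)
    (x : EuclideanSpace ℝ (Fin N)) :
    heatSemigroup s (fun y => (1 + ‖x - y‖ / √s) ^ (-a)) x = gaussianAverage N a := by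
  simp only [heatSemigroup_eq_integral_sub_sqrt_smul hs, sub_sub_cancel, norm_smul,
    norm_of_nonneg (sqrt_nonneg s), mul_div_cancel_left₀ _ (sqrt_pos.2 hs).ne', gaussianAverage]

end HeatSemigroup

section Duhamel

variable {N : ℕ} {γ m b t σ : ℝ}

/-- The integrand at time `σ` of Duhamel's formula at `(x, t)` for the heat equation with source
term `‖y‖ ^ (-γ) * selfSimilar m b y σ`; a power of a `selfSimilar` being again one, this covers
the nonlinearity of the theorem. -/
noncomputable def duhamelIntegrand (γ m b t : ℝ) (x : EuclideanSpace ℝ (Fin N)) (σ : ℝ) : ℝ :=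
  heatSemigroup (t - σ) (fun y => ‖y‖ ^ (-γ) * selfSimilar m b y σ) x

lemma norm_rpow_neg_mul_selfSimilar_nonneg (hσ : 0 ≤ σ) (y : EuclideanSpace ℝ (Fin N)) :
    0 ≤ ‖y‖ ^ (-γ) * selfSimilar m b y σ :=
  mul_nonneg (by positivity) (selfSimilar_nonneg hσ y)

lemma integrable_heatKernel_mul_source (hγ : 0 ≤ γ) (hγN : γ < N) (hb : 0 ≤ b) (hσ : 0 < σ)
    (hσt : σ < t) (x : EuclideanSpace ℝ (Fin N)) :
    Integrable fun y => heatKernel N (t - σ) (x - y) * (‖y‖ ^ (-γ) * selfSimilar m b y σ) := by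
  have hmeas : Measurable fun y : EuclideanSpace ℝ (Fin N) => selfSimilar m b y σ :=
    measurable_selfSimilar.comp measurable_prodMk_left
  simp only [← mul_assoc]
  refine (integrable_heatKernel_mul_norm_rpow_neg (sub_pos.2 hσt) hγ hγN x).mul_bdd
    (c := σ ^ (m - b / 2)) hmeas.aestronglyMeasurable (Eventually.of_forall fun y => ?_)
  rw [norm_of_nonneg (selfSimilar_nonneg hσ.le y)]
  exact selfSimilar_le hb hσ y

lemma exists_duhamelIntegrand_le (hγ : 0 ≤ γ) (hγN : γ < N) (hb : 0 ≤ b) (hbm : b / 2 ≤ m)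
    (x : EuclideanSpace ℝ (Fin N)) :
    ∃ C, ∀ σ ∈ Set.Ioo 0 t, duhamelIntegrand γ m b t x σ ≤ C * (t - σ) ^ (-(γ / 2)) := by
  obtain ⟨C, hC⟩ := exists_heatSemigroup_norm_rpow_neg_le hγ hγN
  refine ⟨t ^ (m - b / 2) * C, fun σ ⟨hσ, hσt⟩ => ?_⟩
  have hs : 0 < t - σ := sub_pos.2 hσt
  have ht : 0 ≤ t := (hσ.trans hσt).le
  have hsource : ∀ y : EuclideanSpace ℝ (Fin N),
      ‖y‖ ^ (-γ) * selfSimilar m b y σ ≤ t ^ (m - b / 2) * ‖y‖ ^ (-γ) := fun y => by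
    rw [mul_comm]
    gcongr
    exact (selfSimilar_le hb hσ y).trans (rpow_le_rpow hσ.le hσt.le (sub_nonneg.2 hbm))
  calc duhamelIntegrand γ m b t x σ
      ≤ heatSemigroup (t - σ) (fun y => t ^ (m - b / 2) * ‖y‖ ^ (-γ)) x := by
        refine heatSemigroup_mono hs.le (norm_rpow_neg_mul_selfSimilar_nonneg hσ.le)
          (Eventually.of_forall hsource) ?_
        simpa only [mul_left_comm _ (t ^ (m - b / 2))] using
          (integrable_heatKernel_mul_norm_rpow_neg hs hγ hγN x).const_mul (t ^ (m - b / 2))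
    _ = t ^ (m - b / 2) * heatSemigroup (t - σ) (fun y => ‖y‖ ^ (-γ)) x :=
        heatSemigroup_const_mul _ _ x
    _ ≤ t ^ (m - b / 2) * (C * (t - σ) ^ (-(γ / 2))) :=
        mul_le_mul_of_nonneg_left (hC _ hs x) (by positivity)
    _ = t ^ (m - b / 2) * C * (t - σ) ^ (-(γ / 2)) := by ring

lemma intervalIntegrable_duhamelIntegrand (hγ : 0 ≤ γ) (hγ2 : γ < 2) (hγN : γ < N) (hb : 0 ≤ b)
    (hbm : b / 2 ≤ m) (ht : 0 ≤ t) (x : EuclideanSpace ℝ (Fin N)) :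
    IntervalIntegrable (duhamelIntegrand γ m b t x) volume 0 t := by
  obtain ⟨C, hC⟩ := exists_duhamelIntegrand_le hγ hγN hb hbm x (t := t)
  have hdom : IntervalIntegrable (fun σ => C * (t - σ) ^ (-(γ / 2))) volume 0 t := by
    have h := (intervalIntegral.intervalIntegrable_rpow' (a := 0) (b := t)
      (by linarith : -1 < -(γ / 2))).comp_sub_left t
    simpa only [sub_zero, sub_self] using (h.symm.const_mul C)
  have hmeas : StronglyMeasurable (duhamelIntegrand γ m b t x) :=
    stronglyMeasurable_heatSemigroup
      ((measurable_snd.norm.pow_const _).mul measurable_selfSimilar) t x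
  rw [intervalIntegrable_iff_integrableOn_Ioo_of_le ht] at hdom ⊢
  refine hdom.mono' hmeas.aestronglyMeasurable ?_
  filter_upwards [ae_restrict_mem measurableSet_Ioo] with σ hσ
  have hnonneg : 0 ≤ duhamelIntegrand γ m b t x σ := heatSemigroup_nonneg (sub_pos.2 hσ.2).le
    (norm_rpow_neg_mul_selfSimilar_nonneg hσ.1.le) x
  rw [norm_of_nonneg hnonneg]
  exact hC σ hσ

lemma le_duhamelIntegrand (hγ : 0 ≤ γ) (hγN : γ < N) (hb : 0 ≤ b) (hσ : 0 < σ) (hσt : σ < t)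
    (x : EuclideanSpace ℝ (Fin N)) :
    (‖x‖ + √t) ^ (-(γ + b)) * gaussianAverage N (γ + b) * σ ^ m ≤ duhamelIntegrand γ m b t x σ := by
  have hs : 0 < t - σ := sub_pos.2 hσt
  have hN : Nontrivial (EuclideanSpace ℝ (Fin N)) :=
    Module.nontrivial_of_finrank_pos (R := ℝ)
      (by simpa using (by exact_mod_cast hγ.trans_lt hγN : 0 < N))
  calc (‖x‖ + √t) ^ (-(γ + b)) * gaussianAverage N (γ + b) * σ ^ m
      = heatSemigroup (t - σ) (fun y => σ ^ m * (‖x‖ + √t) ^ (-(γ + b)) *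
          (1 + ‖x - y‖ / √(t - σ)) ^ (-(γ + b))) x := by
        rw [heatSemigroup_const_mul, heatSemigroup_one_add_norm_div_sqrt_rpow_neg hs]
        ring
    _ ≤ duhamelIntegrand γ m b t x σ := by
        refine heatSemigroup_mono hs.le (fun y => by positivity) ?_
          (integrable_heatKernel_mul_source hγ hγN hb hσ hσt x)
        filter_upwards [Measure.ae_ne volume 0] with y hy
        exact (mul_one_add_rpow_neg_le_selfSimilar (add_nonneg hγ hb) hσ hσt x y).trans
          (selfSimilar_add_le_norm_rpow_neg_mul hγ hσ.le hy)

lemma mul_selfSimilar_le_integral_duhamelIntegrand (hγ : 0 ≤ γ) (hγ2 : γ < 2) (hγN : γ < N)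
    (hb : 0 ≤ b) (hbm : b / 2 ≤ m) (ht : 0 < t) (x : EuclideanSpace ℝ (Fin N)) :
    gaussianAverage N (γ + b) / (m + 1) * selfSimilar (m + 1) (γ + b) x t ≤
      ∫ σ in 0..t, duhamelIntegrand γ m b t x σ := by
  have hm : -1 < m := by linarith
  have hpow := (intervalIntegral.intervalIntegrable_rpow' (a := 0) (b := t) hm).const_mul
    ((‖x‖ + √t) ^ (-(γ + b)) * gaussianAverage N (γ + b))
  calc gaussianAverage N (γ + b) / (m + 1) * selfSimilar (m + 1) (γ + b) x t
      = ∫ σ in 0..t, (‖x‖ + √t) ^ (-(γ + b)) * gaussianAverage N (γ + b) * σ ^ m := by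
        rw [intervalIntegral.integral_const_mul, integral_rpow (Or.inl hm),
          zero_rpow (by linarith), selfSimilar]
        ring
    _ ≤ ∫ σ in 0..t, duhamelIntegrand γ m b t x σ :=
        intervalIntegral.integral_mono_on_of_le_Ioo ht.le hpow
          (intervalIntegrable_duhamelIntegrand hγ hγ2 hγN hb hbm ht.le x)
          fun σ hσ => le_duhamelIntegrand hγ hγN hb hσ.1 hσ.2 x

lemma integral_heatKernel_mul_rpow_eq {l p a q : ℝ} (hl : 0 ≤ l) (hσ : 0 ≤ σ)
    (x : EuclideanSpace ℝ (Fin N)) :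
    ∫ y, heatKernel N (t - σ) (x - y) * ‖y‖ ^ (-γ) * (l * selfSimilar p a y σ) ^ q =
      l ^ q * duhamelIntegrand γ (p * q) (a * q) t x σ := by
  simp only [mul_rpow hl (selfSimilar_nonneg hσ _), selfSimilar_rpow hσ, duhamelIntegrand,
    heatSemigroup, mul_assoc, mul_left_comm _ (l ^ q), integral_const_mul]

lemma one_div_one_sub_mul_add_one {q : ℝ} (hq : q ≠ 1) :
    1 / (1 - q) * q + 1 = 1 / (1 - q) := by
  have hq' : 1 - q ≠ 0 := sub_ne_zero.2 hq.symm
  field_simp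
  ring

lemma rpow_one_div_one_sub_rpow_mul_self {q c : ℝ} (hq : q ≠ 1) (hc : 0 ≤ c) :
    (c ^ (1 / (1 - q))) ^ q * c = c ^ (1 / (1 - q)) := by
  have hexp := one_div_one_sub_mul_add_one hq
  have hne : 1 / (1 - q) * q + 1 ≠ 0 := by
    rw [hexp]
    exact one_div_ne_zero (sub_ne_zero.2 hq.symm)
  rw [← rpow_mul hc, ← rpow_add_one' hc hne, hexp]

lemma div_one_sub_half_lt {q : ℝ} (hq : q < 1) (hγ : γ < 2) :
    γ / (1 - q) / 2 < 1 / (1 - q) := by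
  have hq' : 0 < 1 - q := sub_pos.2 hq
  rw [div_right_comm]
  exact div_lt_div_of_pos_right (by linarith) hq'

lemma le_integral_heatKernel_mul_of_eq_mul_selfSimilar {q l : ℝ} (hq0 : 0 ≤ q) (hq1 : q < 1)
    (hγ : 0 ≤ γ) (hγ2 : γ < 2) (hγN : γ < N) (hl0 : 0 ≤ l)
    (hl : l ≤ l ^ q * ((1 - q) * gaussianAverage N (γ / (1 - q))))
    {w : EuclideanSpace ℝ (Fin N) → ℝ → ℝ}
    (hw : ∀ σ, 0 ≤ σ → ∀ y, w y σ = l * selfSimilar (1 / (1 - q)) (γ / (1 - q)) y σ)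
    (ht : 0 < t) (x : EuclideanSpace ℝ (Fin N)) :
    w x t ≤ ∫ σ in 0..t, ∫ y, heatKernel N (t - σ) (x - y) * ‖y‖ ^ (-γ) * w y σ ^ q := by
  have hq : 0 < 1 - q := sub_pos.2 hq1
  set p := 1 / (1 - q) with hp
  set a := γ / (1 - q) with ha
  set η := gaussianAverage N a
  have hexp_p : p * q + 1 = p := one_div_one_sub_mul_add_one hq1.ne
  have hexp_a : γ + a * q = a := by
    rw [ha, div_eq_mul_one_div]
    linear_combination γ * hexp_p
  have haq : 0 ≤ a * q := mul_nonneg (div_nonneg hγ hq.le) hq0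
  have haqp : a * q / 2 ≤ p * q := by
    rw [mul_div_right_comm]
    exact mul_le_mul_of_nonneg_right (div_one_sub_half_lt hq1 hγ2).le hq0
  have hmain : (1 - q) * η * selfSimilar p a x t ≤
      ∫ σ in 0..t, duhamelIntegrand γ (p * q) (a * q) t x σ := by
    have h := mul_selfSimilar_le_integral_duhamelIntegrand hγ hγ2 hγN haq haqp ht x
    rwa [hexp_a, hexp_p, hp, div_div_eq_mul_div, div_one, mul_comm _ (1 - q)] at h
  calc w x t = l * selfSimilar p a x t := hw t ht.le x
    _ ≤ l ^ q * ((1 - q) * η) * selfSimilar p a x t :=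
        mul_le_mul_of_nonneg_right hl (selfSimilar_nonneg ht.le x)
    _ ≤ l ^ q * ∫ σ in 0..t, duhamelIntegrand γ (p * q) (a * q) t x σ := by
        rw [mul_assoc]
        exact mul_le_mul_of_nonneg_left hmain (by positivity)
    _ = ∫ σ in 0..t, ∫ y, heatKernel N (t - σ) (x - y) * ‖y‖ ^ (-γ) * w y σ ^ q := by
        rw [← intervalIntegral.integral_const_mul]
        refine intervalIntegral.integral_congr fun σ hσ => ?_
        rw [Set.uIcc_of_le ht.le] at hσ
        simp only [hw σ hσ.1, integral_heatKernel_mul_rpow_eq hl0 hσ.1 x]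

end Duhamel

/-- The function `w(x,t) = λ t^{1/(1-q)} (|x|+√t)^{-γ/(1-q)}` (with `w(·,0)=0`
and `λ = [(1-q)η₀]^{1/(1-q)}`) belongs to `C([0,∞); C₀(ℝ^N))`, satisfies
`‖w(·,t)‖_∞ ≤ λ t^{(1-γ/2)/(1-q)}`, and is a sub-solution of the integral
equation for `u_t - Δu = |x|^{-γ} u^q` with zero initial data. -/
theorem subsolution_w (N : ℕ) (hN : 1 ≤ N) (q γ : ℝ)
    (hq0 : 0 < q) (hq1 : q < 1) (hγ0 : 0 < γ) (hγ : γ < min 2 (N : ℝ))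
    (η₀ lam : ℝ)
    (hη₀ : η₀ = (4 * π) ^ (-(N : ℝ) / 2) *
      ∫ z : EuclideanSpace ℝ (Fin N),
        Real.exp (-‖z‖ ^ 2 / 4) * (1 + ‖z‖) ^ (-γ / (1 - q)))
    (hlam : lam = ((1 - q) * η₀) ^ (1 / (1 - q)))
    (w : EuclideanSpace ℝ (Fin N) → ℝ → ℝ)
    (hw0 : ∀ x, w x 0 = 0)
    (hw : ∀ x, ∀ t : ℝ, 0 < t →
      w x t = lam * t ^ (1 / (1 - q)) * (‖x‖ + Real.sqrt t) ^ (-γ / (1 - q))) :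
    -- (a) for every t ≥ 0, x ↦ w(x,t) is continuous and vanishes at infinity
    (∀ t, 0 ≤ t → Continuous (fun x => w x t)) ∧
    (∀ t, 0 ≤ t → Tendsto (fun x => w x t)
      (cocompact (EuclideanSpace ℝ (Fin N))) (nhds 0)) ∧
    -- sup_x |w(x,t)| ≤ λ t^{(1-γ/2)/(1-q)}
    (∀ t, 0 ≤ t → ∀ x, |w x t| ≤ lam * t ^ ((1 - γ / 2) / (1 - q))) ∧
    -- t ↦ w(·,t) is continuous from [0,∞) into (C₀, sup norm)
    (∀ t₀, 0 ≤ t₀ → ∀ ε > (0 : ℝ), ∃ δ > (0 : ℝ), ∀ t, 0 ≤ t →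
      |t - t₀| < δ → ∀ x, |w x t - w x t₀| ≤ ε) ∧
    -- (b) w is a sub-solution of the integral equation with zero initial data
    (∀ t, 0 < t → ∀ x,
      w x t ≤ ∫ σ in (0 : ℝ)..t, ∫ y,
        heatKernel N (t - σ) (x - y) * ‖y‖ ^ (-γ) * w y σ ^ q) := by
  obtain ⟨hγ2, hγN⟩ := lt_min_iff.1 hγ
  have hq : 0 < 1 - q := sub_pos.2 hq1
  have hp : 1 / (1 - q) ≠ 0 := by positivity
  have ha : 0 < γ / (1 - q) := by positivity
  have hexp : (1 - γ / 2) / (1 - q) = 1 / (1 - q) - γ / (1 - q) / 2 := by ring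
  simp only [neg_div (1 - q) γ] at hη₀ hw
  rw [← gaussianAverage_eq] at hη₀
  have hη : 0 ≤ (1 - q) * η₀ := mul_nonneg hq.le (hη₀ ▸ gaussianAverage_nonneg N _)
  have hlam_fix : lam ^ q * ((1 - q) * η₀) = lam :=
    hlam ▸ rpow_one_div_one_sub_rpow_mul_self hq1.ne hη
  have hl : 0 ≤ lam := hlam ▸ rpow_nonneg hη _
  have hwS := eq_mul_selfSimilar_of_eq_zero hp hw0 hw
  refine ⟨fun t ht => ?_, fun t ht => ?_, fun t ht x => ?_, fun t₀ ht₀ ε hε => ?_, fun t ht x => ?_⟩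
  · simpa only [hwS t ht] using (continuous_selfSimilar hp ht).const_mul lam
  · simpa only [hwS t ht, mul_zero] using (tendsto_selfSimilar_cocompact ha).const_mul lam
  · rw [hwS t ht, abs_mul, abs_of_nonneg hl, hexp]
    exact mul_le_mul_of_nonneg_left (abs_selfSimilar_le hp ha.le ht x) hl
  · obtain ⟨δ, hδ, h⟩ := exists_forall_abs_sub_le_of_tendstoUniformly
      ((uniformContinuous_const_smul lam).comp_tendstoUniformly
        (tendstoUniformly_selfSimilar (E := EuclideanSpace ℝ (Fin N)) ha.le
          (div_one_sub_half_lt hq1 hγ2) ht₀)) hε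
    exact ⟨δ, hδ, fun t ht htδ x => by simpa only [hwS t ht, hwS t₀ ht₀] using! h t ht htδ x⟩
  · exact le_integral_heatKernel_mul_of_eq_mul_selfSimilar hq0.le hq1 hγ0.le hγ2 hγN hl
      (hη₀ ▸ hlam_fix.ge) hwS ht x
end
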